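/- arXiv:2201.03487 — 3 statements merged into one kernel-verified Lean document; each statement's English description precedes it below -/
import Mathlib

section
/- Let E be a Polish space (a separable topological space whose topology is induced by a complete metric). Let ~ be an equivalence relation on E whose graph {(x,y) ∈ E×E : x ~ y} is closed in E×E, and let F : E → [0,∞] be a lower semicontinuous function such that for every R ∈ [0,∞) the sublevel set {x ∈ E : F(x) ≤ R} is compact. Define m : E → [0,∞] by m(x) := inf{F(y) : y ~ x}. Then there exists a Borel measurable map S : E → E such that for every x ∈ E: (i) S(x) ~ x; (ii) if m(x) < ∞ then F(S(x)) ≤ 2·m(x); and (iii) if m(x) = ∞ then S(x) = x. -/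
open scoped NNReal ENNReal

/-!
For a closed set `C`, the minimal value of `F` over the part of the orbit of `x` lying in `C` is a
lower semicontinuous function of `x`, because the sublevel sets of `F` are compact. The minimizers
of `F` on the orbit of `x` meet `C` exactly when this value does not exceed the minimum over the
whole orbit, which is a Borel condition on `x`. The minimizers thus form a measurable correspondence
with nonempty compact values on the set where the minimum is finite. A selection of it is found by
running through a sequence of closed sets that separates points, each time intersecting with the
next closed set if the intersection is nonempty: by compactness exactly one point survives.
-/

open Set

section Shrink

variable {E : Type*}

open Classical in
/-- The part of `K` lying in `C` if there is any, and all of `K` otherwise: one step of the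
refinement that isolates a point of `K`. -/
def shrink (C K : Set E) : Set E :=
  if (K ∩ C).Nonempty then K ∩ C else K

/-- The successive refinements of `K` by the sets `C 0`, `C 1`, …, starting with `K` itself. -/
def shrinkSeq (C : ℕ → Set E) (K : Set E) : ℕ → Set E
  | 0 => K
  | n + 1 => shrink (C n) (shrinkSeq C K n)

lemma shrink_of_nonempty {C K : Set E} (h : (K ∩ C).Nonempty) : shrink C K = K ∩ C :=
  if_pos h

lemma shrink_of_not_nonempty {C K : Set E} (h : ¬(K ∩ C).Nonempty) : shrink C K = K :=
  if_neg h

lemma shrink_subset (C K : Set E) : shrink C K ⊆ K := by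
  unfold shrink
  split_ifs
  exacts [inter_subset_left, subset_rfl]

lemma shrink_nonempty (C : Set E) {K : Set E} (hK : K.Nonempty) : (shrink C K).Nonempty := by
  unfold shrink
  split_ifs with h
  exacts [h, hK]

lemma shrink_inter_nonempty_iff {C K D : Set E} :
    (shrink C K ∩ D).Nonempty ↔
      (K ∩ (C ∩ D)).Nonempty ∨ ¬(K ∩ C).Nonempty ∧ (K ∩ D).Nonempty := by
  by_cases h : (K ∩ C).Nonempty
  · simp only [shrink_of_nonempty h, inter_assoc, h, not_true_eq_false, false_and, or_false]
  · have hCD : ¬(K ∩ (C ∩ D)).Nonempty := fun hne =>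
      h (hne.mono (inter_subset_inter_right K inter_subset_left))
    simp only [shrink_of_not_nonempty h, h, hCD, not_false_eq_true, true_and, false_or]

lemma mem_of_mem_shrink {C K : Set E} {y z : E} (hy : y ∈ shrink C K) (hz : z ∈ K) (hzC : z ∈ C) :
    y ∈ C := by
  rw [shrink_of_nonempty ⟨z, hz, hzC⟩] at hy
  exact hy.2

lemma shrinkSeq_nonempty (C : ℕ → Set E) {K : Set E} (hK : K.Nonempty) (n : ℕ) :
    (shrinkSeq C K n).Nonempty := by
  induction n with
  | zero => exact hK
  | succ n ih => exact shrink_nonempty _ ih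

lemma subsingleton_iInter_shrinkSeq {C : ℕ → Set E}
    (hC : ∀ y z, (∀ n, y ∈ C n ↔ z ∈ C n) → y = z) (K : Set E) :
    (⋂ n, shrinkSeq C K n).Subsingleton := by
  intro y hy z hz
  rw [mem_iInter] at hy hz
  exact hC y z fun n =>
    ⟨mem_of_mem_shrink (hz (n + 1)) (hy n), mem_of_mem_shrink (hy (n + 1)) (hz n)⟩

variable [TopologicalSpace E]

lemma isClosed_shrink {C K : Set E} (hC : IsClosed C) (hK : IsClosed K) :
    IsClosed (shrink C K) := by
  unfold shrink
  split_ifs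
  exacts [hK.inter hC, hK]

lemma isClosed_shrinkSeq {C : ℕ → Set E} {K : Set E} (hC : ∀ n, IsClosed (C n))
    (hK : IsClosed K) (n : ℕ) : IsClosed (shrinkSeq C K n) := by
  induction n with
  | zero => exact hK
  | succ n ih => exact isClosed_shrink (hC n) ih

lemma iInter_shrinkSeq_inter_nonempty {C : ℕ → Set E} {K D : Set E} (hC : ∀ n, IsClosed (C n))
    (hKc : IsCompact K) (hK : IsClosed K) (hD : IsClosed D)
    (hne : ∀ n, (shrinkSeq C K n ∩ D).Nonempty) :
    ((⋂ n, shrinkSeq C K n) ∩ D).Nonempty := by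
  rw [iInter_inter]
  exact IsCompact.nonempty_iInter_of_sequence_nonempty_isCompact_isClosed _
    (fun _ => inter_subset_inter_left D (shrink_subset _ _)) hne (hKc.inter_right hD)
    fun n => (isClosed_shrinkSeq hC hK n).inter hD

end Shrink

section Selection

variable {X E : Type*} [MeasurableSpace X] [TopologicalSpace E] {Γ : X → Set E}

/-- A set-valued map `Γ` is a measurable correspondence if the set of parameters `x` for which
`Γ x` meets `C` is measurable, for every closed set `C`. -/
def IsMeasurableCorrespondence (Γ : X → Set E) : Prop :=
  ∀ C, IsClosed C → MeasurableSet {x | (Γ x ∩ C).Nonempty}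

protected lemma IsMeasurableCorrespondence.shrink (hΓ : IsMeasurableCorrespondence Γ) {C : Set E}
    (hC : IsClosed C) : IsMeasurableCorrespondence fun x => shrink C (Γ x) := by
  intro D hD
  simp only [shrink_inter_nonempty_iff]
  exact (hΓ _ (hC.inter hD)).union ((hΓ C hC).compl.inter (hΓ D hD))

protected lemma IsMeasurableCorrespondence.shrinkSeq (hΓ : IsMeasurableCorrespondence Γ)
    {C : ℕ → Set E} (hC : ∀ n, IsClosed (C n)) (n : ℕ) :
    IsMeasurableCorrespondence fun x => shrinkSeq C (Γ x) n := by
  induction n with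
  | zero => exact hΓ
  | succ n ih => exact ih.shrink (hC n)

theorem IsMeasurableCorrespondence.exists_measurable_selection
    [HasCountableSeparatingOn E IsClosed univ] [MeasurableSpace E] [BorelSpace E]
    (hΓ : IsMeasurableCorrespondence Γ) (hcompact : ∀ x, IsCompact (Γ x))
    (hclosed : ∀ x, IsClosed (Γ x)) (hne : ∀ x, (Γ x).Nonempty) :
    ∃ s : X → E, Measurable s ∧ ∀ x, s x ∈ Γ x := by
  obtain ⟨C, hC, hsep⟩ := exists_seq_separating E (p := IsClosed) isClosed_empty univ
  have hlimit (x : X) {D : Set E} (hD : IsClosed D) :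
      (∀ n, (shrinkSeq C (Γ x) n ∩ D).Nonempty) → ((⋂ n, shrinkSeq C (Γ x) n) ∩ D).Nonempty :=
    iInter_shrinkSeq_inter_nonempty hC (hcompact x) (hclosed x) hD
  have hpoint (x : X) : (⋂ n, shrinkSeq C (Γ x) n).Nonempty := by
    simpa only [inter_univ] using hlimit x isClosed_univ
      (by simpa only [inter_univ] using shrinkSeq_nonempty C (hne x))
  choose s hs using hpoint
  refine ⟨s, measurable_of_isClosed fun D hD => ?_, fun x => mem_iInter.1 (hs x) 0⟩
  have hpreimage : s ⁻¹' D = ⋂ n, {x | (shrinkSeq C (Γ x) n ∩ D).Nonempty} := by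
    ext x
    rw [mem_iInter]
    refine ⟨fun hx n => ⟨s x, mem_iInter.1 (hs x) n, hx⟩, fun hx => ?_⟩
    obtain ⟨y, hy, hyD⟩ := hlimit x hD hx
    have hsy : s x = y := subsingleton_iInter_shrinkSeq
      (fun y z => hsep y (mem_univ y) z (mem_univ z)) (Γ x) (hs x) hy
    rwa [mem_preimage, hsy]
  rw [hpreimage]
  exact MeasurableSet.iInter fun n => hΓ.shrinkSeq hC n D hD

end Selection

section Minimizers

variable {X E α : Type*} [CompleteLinearOrder α] {F : E → α}

/-- The set of points of `A` at which `F` attains its infimum over `A`. -/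
def minimizers (F : E → α) (A : Set E) : Set E :=
  {y ∈ A | F y ≤ ⨅ z ∈ A, F z}

variable [TopologicalSpace E]

lemma isClosed_minimizers (hF : LowerSemicontinuous F) {A : Set E} (hA : IsClosed A) :
    IsClosed (minimizers F A) :=
  hA.inter (hF.isClosed_preimage _)

lemma isCompact_minimizers (hcpt : ∀ t < ⊤, IsCompact {y | F y ≤ t}) {A : Set E}
    (hA : IsClosed A) (hfin : (⨅ y ∈ A, F y) < ⊤) : IsCompact (minimizers F A) := by
  have heq : minimizers F A = {y | F y ≤ ⨅ z ∈ A, F z} ∩ A := inter_comm _ _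
  exact heq ▸ (hcpt _ hfin).inter_right hA

lemma minimizers_nonempty (hF : LowerSemicontinuous F)
    (hcpt : ∀ t < ⊤, IsCompact {y | F y ≤ t}) {A : Set E} (hA : IsClosed A)
    (hfin : (⨅ y ∈ A, F y) < ⊤) : (minimizers F A).Nonempty := by
  obtain ⟨y₀, hy₀, hFy₀⟩ : ∃ y₀ ∈ A, F y₀ < ⊤ := by simpa only [iInf_lt_iff, exists_prop] using hfin
  have hne : ({y | F y ≤ F y₀} ∩ A).Nonempty := ⟨y₀, le_rfl, hy₀⟩
  obtain ⟨y, ⟨hyy₀, hyA⟩, hmin⟩ :=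
    (hF.lowerSemicontinuousOn _).exists_isMinOn hne ((hcpt _ hFy₀).inter_right hA)
  refine ⟨y, hyA, le_iInf₂ fun z hz => ?_⟩
  rcases le_total (F z) (F y₀) with hz_le | hle_z
  · exact hmin ⟨hz_le, hz⟩
  · exact le_trans hyy₀ hle_z

lemma biInf_le_iff_inter_nonempty (hF : LowerSemicontinuous F)
    (hcpt : ∀ t < ⊤, IsCompact {y | F y ≤ t}) {A : Set E} (hA : IsClosed A) {t : α}
    (ht : t < ⊤) : (⨅ y ∈ A, F y) ≤ t ↔ (A ∩ {y | F y ≤ t}).Nonempty := by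
  constructor
  · intro h
    obtain ⟨y, hyA, hy⟩ := minimizers_nonempty hF hcpt hA (h.trans_lt ht)
    exact ⟨y, hyA, hy.trans h⟩
  · rintro ⟨y, hyA, hy⟩
    exact (iInf₂_le y hyA).trans hy

lemma minimizers_inter_nonempty_iff (hF : LowerSemicontinuous F)
    (hcpt : ∀ t < ⊤, IsCompact {y | F y ≤ t}) {A C : Set E} (hA : IsClosed A) (hC : IsClosed C)
    (hfin : (⨅ y ∈ A, F y) < ⊤) :
    (minimizers F A ∩ C).Nonempty ↔ (⨅ y ∈ A ∩ C, F y) ≤ ⨅ y ∈ A, F y := by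
  rw [biInf_le_iff_inter_nonempty hF hcpt (hA.inter hC) hfin, inter_right_comm]
  rfl

variable [TopologicalSpace X] {A : X → Set E}

lemma isClosed_of_isClosed_graph (hA : IsClosed {p : E × X | p.1 ∈ A p.2}) (x : X) :
    IsClosed (A x) :=
  hA.preimage (Continuous.prodMk_left x)

lemma lowerSemicontinuous_biInf_of_isClosed_graph (hF : LowerSemicontinuous F)
    (hcpt : ∀ t < ⊤, IsCompact {y | F y ≤ t}) (hA : IsClosed {p : E × X | p.1 ∈ A p.2}) :
    LowerSemicontinuous fun x => ⨅ y ∈ A x, F y := by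
  rw [lowerSemicontinuous_iff_isClosed_preimage]
  intro t
  rcases eq_top_or_lt_top t with rfl | ht
  · simp only [Iic_top, preimage_univ, isClosed_univ]
  · have hpreimage : (fun x => ⨅ y ∈ A x, F y) ⁻¹' Iic t =
        SetRel.image {p : E × X | p.1 ∈ A p.2} {y | F y ≤ t} := by
      ext x
      refine (biInf_le_iff_inter_nonempty hF hcpt (isClosed_of_isClosed_graph hA x) ht).trans ?_
      rw [inter_comm]
      rfl
    exact hpreimage ▸ hA.relImage_of_isCompact (hcpt t ht)

variable [MeasurableSpace X] [OpensMeasurableSpace X] [TopologicalSpace α] [OrderTopology α]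
  [SecondCountableTopology α]

lemma isMeasurableCorrespondence_minimizers (hF : LowerSemicontinuous F)
    (hcpt : ∀ t < ⊤, IsCompact {y | F y ≤ t}) (hA : IsClosed {p : E × X | p.1 ∈ A p.2}) :
    IsMeasurableCorrespondence
      fun x : {x | (⨅ y ∈ A x, F y) < ⊤} => minimizers F (A x) := by
  intro C hC
  have hAC : IsClosed {p : E × X | p.1 ∈ A p.2 ∩ C} := hA.inter (hC.preimage continuous_fst)
  borelize α
  have hle : MeasurableSet {x | (⨅ y ∈ A x ∩ C, F y) ≤ ⨅ y ∈ A x, F y} :=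
    measurableSet_le (lowerSemicontinuous_biInf_of_isClosed_graph hF hcpt hAC).measurable
      (lowerSemicontinuous_biInf_of_isClosed_graph hF hcpt hA).measurable
  convert measurable_subtype_coe hle using 1
  ext x
  exact minimizers_inter_nonempty_iff hF hcpt (isClosed_of_isClosed_graph hA x) hC x.2

theorem exists_measurable_mem_minimizers_extending [HasCountableSeparatingOn E IsClosed univ]
    [MeasurableSpace E] [BorelSpace E] (hF : LowerSemicontinuous F)
    (hcpt : ∀ t < ⊤, IsCompact {y | F y ≤ t}) (hA : IsClosed {p : E × X | p.1 ∈ A p.2})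
    {f : X → E} (hf : Measurable f) :
    ∃ s : X → E, Measurable s ∧ ∀ x,
      ((⨅ y ∈ A x, F y) < ⊤ → s x ∈ minimizers F (A x)) ∧
      ((⨅ y ∈ A x, F y) = ⊤ → s x = f x) := by
  classical
  borelize α
  have hclosed (x : X) : IsClosed (A x) := isClosed_of_isClosed_graph hA x
  obtain ⟨s, hs, hmem⟩ :=
    (isMeasurableCorrespondence_minimizers hF hcpt hA).exists_measurable_selection
      (fun x => isCompact_minimizers hcpt (hclosed x) x.2)
      (fun x => isClosed_minimizers hF (hclosed x))
      (fun x => minimizers_nonempty hF hcpt (hclosed x) x.2)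
  have hfinite : MeasurableSet {x | (⨅ y ∈ A x, F y) < ⊤} :=
    (lowerSemicontinuous_biInf_of_isClosed_graph hF hcpt hA).measurable measurableSet_Iio
  refine ⟨_, hs.dite (hf.comp measurable_subtype_coe) hfinite,
    fun x => ⟨fun hlt => ?_, fun htop => ?_⟩⟩
  · have hx : x ∈ {x | (⨅ y ∈ A x, F y) < ⊤} := hlt
    rw [dif_pos hx]
    exact hmem ⟨x, hlt⟩
  · exact dif_neg (not_lt_top_iff.2 htop)

end Minimizers

theorem stmt_0_general {E : Type*} [TopologicalSpace E] [HasCountableSeparatingOn E IsClosed univ]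
    [MeasurableSpace E] [BorelSpace E]
    {α : Type*} [CompleteLinearOrder α] [TopologicalSpace α] [OrderTopology α]
    [SecondCountableTopology α]
    (r : E → E → Prop) (hr : ∀ x, r x x)
    (hgraph : IsClosed {p : E × E | r p.1 p.2})
    (F : E → α) (hF : LowerSemicontinuous F)
    (hcpt : ∀ t < ⊤, IsCompact {x : E | F x ≤ t}) :
    ∃ S : E → E, Measurable S ∧ ∀ x : E,
      r (S x) x ∧
      F (S x) = (⨅ y ∈ {y : E | r y x}, F y) ∧
      ((⨅ y ∈ {y : E | r y x}, F y) = ⊤ → S x = x) := by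
  obtain ⟨S, hS, hmem⟩ := exists_measurable_mem_minimizers_extending
    (A := fun x => {y | r y x}) hF hcpt hgraph measurable_id
  refine ⟨S, hS, fun x => ?_⟩
  obtain ⟨hfinite, hinfinite⟩ := hmem x
  rcases lt_or_eq_of_le (le_top : (⨅ y ∈ {y | r y x}, F y) ≤ ⊤) with hlt | htop
  · obtain ⟨hrel, hle⟩ := hfinite hlt
    exact ⟨hrel, hle.antisymm (biInf_le F hrel), hinfinite⟩
  · have hSx : S x = x := hinfinite htop
    have hFx : F x = ⊤ := top_le_iff.1 (htop.ge.trans (biInf_le F (hr x)))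
    exact ⟨hSx.symm ▸ hr x, by rw [hSx, hFx, htop], hinfinite⟩

theorem stmt_0 {E : Type*} [TopologicalSpace E] [PolishSpace E]
    [MeasurableSpace E] [BorelSpace E]
    (r : E → E → Prop) (hr : Equivalence r)
    (hgraph : IsClosed {p : E × E | r p.1 p.2})
    (F : E → ℝ≥0∞) (hF : LowerSemicontinuous F)
    (hcpt : ∀ R : ℝ≥0, IsCompact {x : E | F x ≤ R}) :
    ∃ S : E → E, Measurable S ∧ ∀ x : E,
      r (S x) x ∧
      ((⨅ y ∈ {y : E | r y x}, F y) < ⊤ →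
        F (S x) ≤ 2 * ⨅ y ∈ {y : E | r y x}, F y) ∧
      ((⨅ y ∈ {y : E | r y x}, F y) = ⊤ → S x = x) := by
  obtain ⟨S, hS, h⟩ := stmt_0_general r hr.refl hgraph F hF fun t ht => by
    lift t to ℝ≥0 using ht.ne
    exact hcpt t
  exact ⟨S, hS, fun x => (h x).imp_right <| And.imp_left fun hmin _ =>
    hmin.le.trans (le_mul_of_one_le_left zero_le one_le_two)⟩
end

section
/- Let (Ω,ℱ,P) be a probability space and V a finite-dimensional normed real vector space. Let 𝒳 := {(x,v) : x ∈ 𝕋³ = ℝ³/ℤ³, v ∈ ℝ³, ‖v‖ ≤ 1/4} be the set of segments on the 3-torus, and let A be a V-valued stochastic process indexed by 𝒳 (each A(ℓ) is measurable) which is almost surely additive: for every segment (x,v) ∈ 𝒳 and every c ∈ [0,1], A(x,v) = A(x,cv) + A(x+cv,(1−c)v) almost surely. Suppose there exist r,s ∈ (0,1), p,M > 0 and α ∈ (0,1] such that E[‖A(x,v)‖^p] ≤ M‖v‖^{pα} for every segment with 0 < ‖v‖ < r, and such that E[‖A(∂P)‖^p] ≤ M|P|^{pα/2} for every triangle P =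 (x,v,w) with x ∈ 𝕋³, v,w ∈ ℝ³, ‖v‖,‖w‖,‖v−w‖ ≤ 1/4 and area |P| := ‖v×w‖/2 < s, where A(∂P) := A(x,v) + A(x+v,w−v) + A(x+w,−w). Then A admits a modification Ã (i.e. for each ℓ ∈ 𝒳, P(Ã(ℓ) = A(ℓ)) = 1) which is almost surely a continuous function on 𝒳, and for every ᾱ ∈ (0, α − 24/p) there exists λ > 0, depending only on p, α, ᾱ, such that E[ sup{ (‖Ã(x,v)‖/‖v‖^ᾱ)^p : (x,v) ∈ 𝒳, 0 < ‖v‖ < r } ] ≤ λ M ((s^{−6} + r^{−12}) r^{p(α−ᾱ)} + 1). -/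
noncomputable section
open MeasureTheory
open scoped ENNReal

/-- The 3-torus `𝕋³ = ℝ³/ℤ³`. -/
abbrev T3 : Type := Fin 3 → AddCircle (1 : ℝ)

/-- `ℝ³` with the Euclidean norm. -/
abbrev E3 : Type := EuclideanSpace ℝ (Fin 3)

/-- The quotient map `ℝ³ → 𝕋³`. -/
def tq (v : E3) : T3 := fun i => (v i : AddCircle (1 : ℝ))

/-- The cross product of two vectors in `ℝ³`. -/
def cross (v w : E3) : E3 :=
  (WithLp.equiv 2 (Fin 3 → ℝ)).symm
    ![v 1 * w 2 - v 2 * w 1, v 2 * w 0 - v 0 * w 2, v 0 * w 1 - v 1 * w 0]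

/-- The area `|P| = ‖v × w‖ / 2` of the triangle `P = (x, v, w)`. -/
def triArea (v w : E3) : ℝ := ‖cross v w‖ / 2

universe uo uv

/-!
Read the process in coordinates, as a random function `F x y` of two points of `ℝᵈ`, periodic under
the lattice. The segment moments control `F` on short segments. Moving one end point by one cell of
the grid of mesh `2⁻ⁿ` changes `F` by its value on a short segment and on the boundary of a triangle
of area at most length times mesh, which the triangle moments control.

Up to periodicity there are at most of order `2 ^ (2 d n)` segments and as many triangles to
consider on that grid, and `p (α - β) / 2 > 2 d`, so a union bound turns the moments into one random
constant `K`, with an explicit bound on its `p`-th moment, such that almost surely `K` controls all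
these segments and triangles at once. Rounding both end points of a segment to finer and finer grids
then gives a geometrically convergent sequence, whose limit is continuous and of size `K` times the
length to the power `β`. The limit equals `F` almost surely at each fixed pair of points because the
moments along the roundings are summable, and it descends to the torus.

This handles the segments shorter than a fixed fraction of `r`. Cutting a segment into `n` equal
pieces, which almost sure additivity allows, reaches all the others, at the cost of a factor
`n ^ (1 - β)`.
-/

section KolmogorovCriterion

open Filter Topology

local notation "δ[" n "]" => (1 / 2 : ℝ) ^ (n : ℕ)

section DyadicGrid

variable {ι : Type*}

/-- The point `2⁻ⁿ a` of the dyadic grid of mesh `2⁻ⁿ`; for `n = 0` this is the inclusion of the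
integer lattice. -/
def dyadicPoint (n : ℕ) : (ι → ℤ) →+ (ι → ℝ) where
  toFun a i := a i * δ[n]
  map_zero' := by ext; simp
  map_add' a b := by ext; simp [add_mul]

/-- The grid coordinates at mesh `2⁻ⁿ` of the lower left corner of the dyadic cube containing
`x`. -/
def dyadicFloor (n : ℕ) (x : ι → ℝ) : ι → ℤ := fun i => ⌊x i * 2 ^ n⌋

lemma dyadicPoint_apply (n : ℕ) (a : ι → ℤ) (i : ι) : dyadicPoint n a i = a i * δ[n] := rfl

lemma dyadicPoint_add_smul (n k : ℕ) (a : ι → ℤ) :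
    dyadicPoint (n + k) ((2 ^ k : ℤ) • a) = dyadicPoint n a := by
  ext i
  simp only [dyadicPoint_apply, Pi.smul_apply, smul_eq_mul, pow_add, one_div, inv_pow]
  push_cast
  field_simp

lemma dyadicFloor_add_dyadicPoint_zero (n : ℕ) (x : ι → ℝ) (k : ι → ℤ) :
    dyadicFloor n (x + dyadicPoint 0 k) = dyadicFloor n x + (2 ^ n : ℤ) • k := by
  ext i
  simp only [dyadicFloor, dyadicPoint_apply, Pi.add_apply, Pi.smul_apply, smul_eq_mul,
    ← Int.floor_add_intCast]
  push_cast
  ring_nf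

lemma half_pow_le_half_pow {m n : ℕ} (h : m ≤ n) : δ[n] ≤ δ[m] :=
  pow_le_pow_of_le_one (by norm_num) (by norm_num) h

variable [Fintype ι]

lemma norm_dyadicPoint (n : ℕ) (a : ι → ℤ) : ‖dyadicPoint n a‖ = ‖a‖ * δ[n] := by
  have hcast : ‖fun i => (a i : ℝ)‖ = ‖a‖ := rfl
  have hsmul : dyadicPoint n a = δ[n] • fun i => (a i : ℝ) := by
    ext i; simp [dyadicPoint_apply, mul_comm]
  rw [hsmul, norm_smul, hcast, Real.norm_of_nonneg (by positivity), mul_comm]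

lemma norm_dyadicPoint_add_sub_self (n : ℕ) (a b : ι → ℤ) :
    ‖dyadicPoint n (a + b) - dyadicPoint n a‖ = ‖dyadicPoint n b‖ := by
  rw [map_add, add_sub_cancel_left]

lemma norm_dyadicPoint_sub_le_of_norm_sub_le_one (n : ℕ) {a b : ι → ℤ} (h : ‖b - a‖ ≤ 1) :
    ‖dyadicPoint n b - dyadicPoint n a‖ ≤ δ[n] := by
  rw [← map_sub, norm_dyadicPoint]
  exact mul_le_of_le_one_left (by positivity) h

lemma norm_dyadicPoint_dyadicFloor_sub_le (n : ℕ) (x : ι → ℝ) :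
    ‖dyadicPoint n (dyadicFloor n x) - x‖ ≤ δ[n] := by
  refine (pi_norm_le_iff_of_nonneg (by positivity)).2 fun i => ?_
  have hfloor := Int.floor_le (x i * 2 ^ n)
  have hlt := Int.lt_floor_add_one (x i * 2 ^ n)
  have hdiff : (dyadicPoint n (dyadicFloor n x) - x) i = (⌊x i * 2 ^ n⌋ - x i * 2 ^ n) * δ[n] := by
    rw [Pi.sub_apply, dyadicPoint_apply, dyadicFloor, one_div, inv_pow]; field_simp
  rw [hdiff, norm_mul, Real.norm_eq_abs, Real.norm_of_nonneg (by positivity)]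
  refine mul_le_of_le_one_left (by positivity) (abs_le.2 ⟨?_, ?_⟩) <;> linarith

lemma norm_dyadicPoint_dyadicFloor_sub_dyadicPoint_dyadicFloor_le (n : ℕ) (x y : ι → ℝ) :
    ‖dyadicPoint n (dyadicFloor n y) - dyadicPoint n (dyadicFloor n x)‖
      ≤ ‖y - x‖ + 2 * δ[n] := by
  have hx := norm_dyadicPoint_dyadicFloor_sub_le n x
  have hy := norm_dyadicPoint_dyadicFloor_sub_le n y
  have hsplit : dyadicPoint n (dyadicFloor n y) - dyadicPoint n (dyadicFloor n x)
      = (y - x) + (dyadicPoint n (dyadicFloor n y) - y)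
        - (dyadicPoint n (dyadicFloor n x) - x) := by abel
  rw [hsplit]
  linarith [norm_sub_le ((y - x) + (dyadicPoint n (dyadicFloor n y) - y))
    (dyadicPoint n (dyadicFloor n x) - x),
    norm_add_le (y - x) (dyadicPoint n (dyadicFloor n y) - y)]

lemma norm_intVector_le_iff {a : ι → ℤ} {m : ℕ} : ‖a‖ ≤ m ↔ ∀ i, |a i| ≤ m := by
  rw [pi_norm_le_iff_of_nonneg (by positivity)]
  refine forall_congr' fun i => ?_
  rw [Int.norm_eq_abs]
  norm_cast

lemma norm_dyadicFloor_succ_sub_le (n : ℕ) (x : ι → ℝ) :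
    ‖dyadicFloor (n + 1) x - (2 : ℤ) • dyadicFloor n x‖ ≤ 1 := by
  suffices h : ∀ i, |⌊x i * 2 ^ (n + 1)⌋ - 2 * ⌊x i * 2 ^ n⌋| ≤ 1 by
    exact (norm_intVector_le_iff.2 h).trans_eq Nat.cast_one
  intro i
  have hdouble : x i * 2 ^ (n + 1) = 2 * (x i * 2 ^ n) := by ring
  have hfloor := Int.floor_le (x i * 2 ^ n)
  have hlt := Int.lt_floor_add_one (x i * 2 ^ n)
  have hlower : 2 * ⌊x i * 2 ^ n⌋ ≤ ⌊x i * 2 ^ (n + 1)⌋ := by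
    rw [Int.le_floor, hdouble]; push_cast; linarith
  have hupper : ⌊x i * 2 ^ (n + 1)⌋ < 2 * ⌊x i * 2 ^ n⌋ + 2 := by
    rw [Int.floor_lt, hdouble]; push_cast; linarith
  rw [abs_le]; omega

lemma norm_dyadicFloor_sub_le_one {n : ℕ} {x y : ι → ℝ} (h : ‖y - x‖ ≤ δ[n]) :
    ‖dyadicFloor n y - dyadicFloor n x‖ ≤ 1 := by
  suffices h' : ∀ i, |⌊y i * 2 ^ n⌋ - ⌊x i * 2 ^ n⌋| ≤ 1 by
    exact (norm_intVector_le_iff.2 h').trans_eq Nat.cast_one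
  intro i
  have hscale : |y i * 2 ^ n - x i * 2 ^ n| ≤ 1 := by
    rw [← sub_mul, abs_mul, abs_of_pos (by positivity : (0 : ℝ) < 2 ^ n)]
    calc |y i - x i| * 2 ^ n ≤ δ[n] * 2 ^ n := by gcongr; exact (norm_le_pi_norm (y - x) i).trans h
      _ = 1 := by rw [← mul_pow]; norm_num
  rw [abs_le] at hscale
  have hy : ⌊y i * 2 ^ n⌋ ≤ ⌊x i * 2 ^ n + 1⌋ := Int.floor_le_floor (by linarith)
  have hx : ⌊x i * 2 ^ n⌋ ≤ ⌊y i * 2 ^ n + 1⌋ := Int.floor_le_floor (by linarith)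
  rw [Int.floor_add_one] at hx hy
  rw [abs_le]; omega

end DyadicGrid

section Chaining

variable {ι V : Type*} [NormedAddCommGroup V]

/-- The sum of a function of oriented segments along the boundary of the triangle `x y z`. -/
def triangleBoundary (f : (ι → ℝ) → (ι → ℝ) → V) (x y z : ι → ℝ) : V :=
  f x y + f y z + f z x

/-- The size allowed for a function of Hölder exponent `β` on the boundary of a triangle with one
side of length at most `δ` and another of length at most `L`, hence of area at most `L δ`. -/
def chainWeight (β L δ : ℝ) : ℝ := ((L + δ) * δ) ^ (β / 2)

lemma chainWeight_mono {β L L' δ δ' : ℝ} (hβ : 0 < β) (hL : 0 ≤ L) (hδ : 0 ≤ δ) (hL' : L ≤ L')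
    (hδ' : δ ≤ δ') : chainWeight β L δ ≤ chainWeight β L' δ' := by
  have hL'0 := hL.trans hL'
  have hδ'0 := hδ.trans hδ'
  unfold chainWeight
  gcongr

lemma rpow_le_chainWeight {β L δ : ℝ} (hβ : 0 < β) (hL : 0 ≤ L) (hδ : 0 ≤ δ) :
    δ ^ β ≤ chainWeight β L δ := by
  calc δ ^ β = (δ * δ) ^ (β / 2) := by
        rw [Real.mul_rpow hδ hδ, ← Real.rpow_add_of_nonneg hδ (by positivity) (by positivity),
          add_halves]
    _ ≤ chainWeight β L δ := by unfold chainWeight; gcongr; linarith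

lemma half_rpow_half_lt_one {β : ℝ} (hβ : 0 < β) : (1 / 2 : ℝ) ^ (β / 2) < 1 :=
  Real.rpow_lt_one (by norm_num) (by norm_num) (by positivity)

lemma chainWeight_half_pow_add_le {β L : ℝ} (hβ : 0 < β) (hL : 0 ≤ L) (m k : ℕ) :
    chainWeight β (L + 3 * δ[m + k]) δ[m + k]
      ≤ chainWeight β (L + 3 * δ[m]) δ[m] * ((1 / 2 : ℝ) ^ (β / 2)) ^ k := by
  have hle : δ[m + k] ≤ δ[m] := half_pow_le_half_pow (Nat.le_add_right m k)
  rw [← Real.rpow_mul_natCast (by norm_num), mul_comm (β / 2), Real.rpow_natCast_mul (by norm_num)]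
  unfold chainWeight
  rw [← Real.mul_rpow (by positivity) (by positivity), mul_assoc, ← pow_add]
  gcongr

/-- The factor by which chaining enlarges the constant of a function of Hölder exponent `β`: the
first approximation, and a geometric series for all later ones. -/
def chainConst (β : ℝ) : ℝ := 5 ^ β * (1 + 4 / (1 - (1 / 2 : ℝ) ^ (β / 2)))

lemma chainConst_pos {β : ℝ} (hβ : 0 < β) : 0 < chainConst β := by
  have hratio := sub_pos.2 (half_rpow_half_lt_one hβ)
  unfold chainConst
  positivity

/-- The value of `f` on the segment whose end points are those of `x y` rounded down to the grid
of mesh `2⁻ⁿ`. -/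
def dyadicApprox (f : (ι → ℝ) → (ι → ℝ) → V) (n : ℕ) (x y : ι → ℝ) : V :=
  f (dyadicPoint n (dyadicFloor n x)) (dyadicPoint n (dyadicFloor n y))

/-- The limit of the dyadic approximations of `f`; a junk value where they do not converge. -/
def dyadicLimit (f : (ι → ℝ) → (ι → ℝ) → V) (x y : ι → ℝ) : V :=
  limUnder atTop fun n => dyadicApprox f n x y

lemma dyadicLimit_add_dyadicPoint_zero {f : (ι → ℝ) → (ι → ℝ) → V}
    (hf : ∀ x y k, f (x + dyadicPoint 0 k) (y + dyadicPoint 0 k) = f x y) (x y : ι → ℝ)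
    (k : ι → ℤ) :
    dyadicLimit f (x + dyadicPoint 0 k) (y + dyadicPoint 0 k) = dyadicLimit f x y := by
  have hround : ∀ n (z : ι → ℝ), dyadicPoint n (dyadicFloor n (z + dyadicPoint 0 k))
      = dyadicPoint n (dyadicFloor n z) + dyadicPoint 0 k := fun n z => by
    rw [dyadicFloor_add_dyadicPoint_zero, map_add, ← dyadicPoint_add_smul 0 n, zero_add]
  simp only [dyadicLimit, dyadicApprox, hround, hf]

variable [Fintype ι]

/-- Quantitative control, with Hölder exponent `β` and constant `κ`, of a function of two points on
the dyadic grids of mesh at most `2⁻ᴺ`. The margins added to the range `ρ` of lengths leave room for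
rounding end points to the grid. -/
structure DyadicControl (f : (ι → ℝ) → (ι → ℝ) → V) (κ ρ β : ℝ) (N : ℕ) : Prop where
  short : ∀ n, N ≤ n → ∀ a b, ‖b - a‖ ≤ 1 →
    ‖f (dyadicPoint n a) (dyadicPoint n b)‖ ≤ κ * δ[n] ^ β
  triangle : ∀ n, N ≤ n → ∀ a b c, ‖c - b‖ ≤ 1 →
    ‖dyadicPoint n b - dyadicPoint n a‖ ≤ ρ + 3 * δ[N] →
    ‖triangleBoundary f (dyadicPoint n a) (dyadicPoint n b) (dyadicPoint n c)‖
      ≤ κ * chainWeight β ‖dyadicPoint n b - dyadicPoint n a‖ δ[n]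
  coarse : ∀ a b, ‖dyadicPoint N b - dyadicPoint N a‖ ≤ ρ + 3 * δ[N] →
    ‖f (dyadicPoint N a) (dyadicPoint N b)‖ ≤ κ * (‖dyadicPoint N b - dyadicPoint N a‖ + δ[N]) ^ β
  antisymm : ∀ n, N ≤ n → ∀ a b, ‖dyadicPoint n b - dyadicPoint n a‖ ≤ ρ + 4 * δ[N] →
    f (dyadicPoint n a) (dyadicPoint n b) = -f (dyadicPoint n b) (dyadicPoint n a)

namespace DyadicControl

variable {f : (ι → ℝ) → (ι → ℝ) → V} {κ ρ β : ℝ} {N n m : ℕ} {x y : ι → ℝ}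

lemma nonneg (hf : DyadicControl f κ ρ β N) : 0 ≤ κ := by
  have hshort := (norm_nonneg _).trans (hf.short N le_rfl 0 0 (by simp))
  exact nonneg_of_mul_nonneg_left hshort (by positivity)

lemma norm_sub_le_of_right_near (hf : DyadicControl f κ ρ β N) (hβ : 0 < β) (hn : N ≤ n)
    {a b c : ι → ℤ} (hbc : ‖c - b‖ ≤ 1)
    (hab : ‖dyadicPoint n b - dyadicPoint n a‖ ≤ ρ + 3 * δ[N]) :
    ‖f (dyadicPoint n a) (dyadicPoint n c) - f (dyadicPoint n a) (dyadicPoint n b)‖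
      ≤ 2 * κ * chainWeight β ‖dyadicPoint n b - dyadicPoint n a‖ δ[n] := by
  have hκ := hf.nonneg
  have hca : ‖dyadicPoint n a - dyadicPoint n c‖ ≤ ρ + 4 * δ[N] := by
    rw [norm_sub_rev]
    linarith [norm_sub_le_norm_sub_add_norm_sub (dyadicPoint n c) (dyadicPoint n b)
      (dyadicPoint n a), norm_dyadicPoint_sub_le_of_norm_sub_le_one n hbc,
      half_pow_le_half_pow hn]
  have hsplit : f (dyadicPoint n a) (dyadicPoint n c) - f (dyadicPoint n a) (dyadicPoint n b)
      = f (dyadicPoint n b) (dyadicPoint n c)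
        - triangleBoundary f (dyadicPoint n a) (dyadicPoint n b) (dyadicPoint n c) := by
    rw [triangleBoundary, hf.antisymm n hn c a hca]; abel
  rw [hsplit]
  calc _ ≤ κ * δ[n] ^ β + κ * chainWeight β ‖dyadicPoint n b - dyadicPoint n a‖ δ[n] :=
        (norm_sub_le _ _).trans
          (add_le_add (hf.short n hn b c hbc) (hf.triangle n hn a b c hbc hab))
    _ ≤ κ * chainWeight β ‖dyadicPoint n b - dyadicPoint n a‖ δ[n]
          + κ * chainWeight β ‖dyadicPoint n b - dyadicPoint n a‖ δ[n] := by
        gcongr; exact rpow_le_chainWeight hβ (norm_nonneg _) (by positivity)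
    _ = _ := by ring

lemma norm_sub_le_of_near (hf : DyadicControl f κ ρ β N) (hβ : 0 < β) (hn : N ≤ n)
    {a b a' b' : ι → ℤ} (ha : ‖a' - a‖ ≤ 1) (hb : ‖b' - b‖ ≤ 1)
    (hab : ‖dyadicPoint n b - dyadicPoint n a‖ ≤ ρ + 2 * δ[N]) :
    ‖f (dyadicPoint n a') (dyadicPoint n b') - f (dyadicPoint n a) (dyadicPoint n b)‖
      ≤ 4 * κ * chainWeight β (‖dyadicPoint n b - dyadicPoint n a‖ + δ[n]) δ[n] := by
  have hκ := hf.nonneg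
  have hδ : (0 : ℝ) < δ[n] := by positivity
  have hδN := half_pow_le_half_pow hn
  have hab' : ‖dyadicPoint n a - dyadicPoint n b'‖
      ≤ ‖dyadicPoint n b - dyadicPoint n a‖ + δ[n] := by
    rw [norm_sub_rev]
    linarith [norm_sub_le_norm_sub_add_norm_sub (dyadicPoint n b') (dyadicPoint n b)
      (dyadicPoint n a), norm_dyadicPoint_sub_le_of_norm_sub_le_one n hb]
  have ha'b' : ‖dyadicPoint n a' - dyadicPoint n b'‖ ≤ ρ + 4 * δ[N] := by
    linarith [norm_sub_le_norm_sub_add_norm_sub (dyadicPoint n a') (dyadicPoint n a)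
      (dyadicPoint n b'), norm_dyadicPoint_sub_le_of_norm_sub_le_one n ha]
  have hright := hf.norm_sub_le_of_right_near hβ hn hb (a := a) (by linarith)
  have hleft := hf.norm_sub_le_of_right_near hβ hn ha (a := b') (by linarith)
  rw [hf.antisymm n hn b' a' ha'b', hf.antisymm n hn b' a (by linarith), neg_sub_neg,
    norm_sub_rev] at hleft
  calc _ ≤ _ := norm_sub_le_norm_sub_add_norm_sub _ (f (dyadicPoint n a) (dyadicPoint n b')) _
    _ ≤ _ := add_le_add hleft hright
    _ ≤ 2 * κ * chainWeight β (‖dyadicPoint n b - dyadicPoint n a‖ + δ[n]) δ[n]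
          + 2 * κ * chainWeight β (‖dyadicPoint n b - dyadicPoint n a‖ + δ[n]) δ[n] := by
        gcongr <;> apply chainWeight_mono hβ <;> first | positivity | linarith
    _ = _ := by ring

lemma norm_dyadicApprox_succ_sub_le (hf : DyadicControl f κ ρ β N) (hβ : 0 < β) (hn : N ≤ n)
    (hxy : ‖y - x‖ ≤ ρ) :
    ‖dyadicApprox f (n + 1) x y - dyadicApprox f n x y‖
      ≤ 4 * κ * chainWeight β (‖y - x‖ + 3 * δ[n]) δ[n] := by
  have hκ := hf.nonneg
  have hrefine : ∀ z : ι → ℝ, dyadicPoint n (dyadicFloor n z)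
      = dyadicPoint (n + 1) ((2 : ℤ) • dyadicFloor n z) := fun z => by
    simpa using (dyadicPoint_add_smul n 1 (dyadicFloor n z)).symm
  have hlen := norm_dyadicPoint_dyadicFloor_sub_dyadicPoint_dyadicFloor_le n x y
  have hδ : (1 / 2 : ℝ) ^ (n + 1) ≤ δ[n] := half_pow_le_half_pow n.le_succ
  have hδN := half_pow_le_half_pow hn
  unfold dyadicApprox
  rw [hrefine x, hrefine y] at hlen ⊢
  refine (hf.norm_sub_le_of_near hβ (show N ≤ n + 1 by omega) (norm_dyadicFloor_succ_sub_le n x)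
    (norm_dyadicFloor_succ_sub_le n y) (by linarith)).trans ?_
  gcongr
  exact chainWeight_mono hβ (by positivity) (by positivity) (by linarith) hδ

lemma dist_dyadicApprox_add_le (hf : DyadicControl f κ ρ β N) (hβ : 0 < β) (hm : N ≤ m)
    (hxy : ‖y - x‖ ≤ ρ) (k : ℕ) :
    dist (dyadicApprox f (m + k) x y) (dyadicApprox f (m + (k + 1)) x y)
      ≤ 4 * κ * chainWeight β (‖y - x‖ + 3 * δ[m]) δ[m] * ((1 / 2 : ℝ) ^ (β / 2)) ^ k := by
  have hκ := hf.nonneg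
  rw [dist_comm, dist_eq_norm, mul_assoc]
  refine (hf.norm_dyadicApprox_succ_sub_le hβ (hm.trans (Nat.le_add_right m k)) hxy).trans ?_
  gcongr
  exact chainWeight_half_pow_add_le hβ (norm_nonneg _) m k

lemma exists_norm_dyadicApprox_le (hf : DyadicControl f κ ρ β N) (hβ : 0 < β)
    (hxy : ‖y - x‖ ≤ ρ) (hne : 0 < ‖y - x‖) :
    ∃ m, N ≤ m ∧ δ[m] ≤ 2 * ‖y - x‖ ∧ ‖dyadicApprox f m x y‖ ≤ κ * (4 * ‖y - x‖) ^ β := by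
  have hκ := hf.nonneg
  rcases le_or_gt ‖y - x‖ δ[N] with hle | hlt
  · obtain ⟨k, hk, hk'⟩ := exists_nat_pow_near_of_lt_one (x := ‖y - x‖ / δ[N]) (by positivity)
      (div_le_one_of_le₀ hle (by positivity)) (show (0 : ℝ) < 1 / 2 by norm_num) (by norm_num)
    rw [lt_div_iff₀ (by positivity), ← pow_add, add_right_comm, pow_succ, add_comm k] at hk
    rw [div_le_iff₀ (by positivity), ← pow_add, add_comm k] at hk'
    refine ⟨N + k, Nat.le_add_right N k, by linarith, ?_⟩
    refine (hf.short _ (Nat.le_add_right N k) _ _ (norm_dyadicFloor_sub_le_one hk')).trans ?_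
    gcongr
    linarith
  · have hlen := norm_dyadicPoint_dyadicFloor_sub_dyadicPoint_dyadicFloor_le N x y
    have hδ : (0 : ℝ) < δ[N] := by positivity
    refine ⟨N, le_rfl, by linarith, (hf.coarse _ _ (by linarith)).trans ?_⟩
    gcongr
    linarith

variable [CompleteSpace V]

lemma tendsto_dyadicLimit (hf : DyadicControl f κ ρ β N) (hβ : 0 < β) (hxy : ‖y - x‖ ≤ ρ) :
    Tendsto (fun n => dyadicApprox f n x y) atTop (𝓝 (dyadicLimit f x y)) := by
  have hcauchy : CauchySeq fun k => dyadicApprox f (N + k) x y :=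
    cauchySeq_of_le_geometric _ _ (half_rpow_half_lt_one hβ)
      (hf.dist_dyadicApprox_add_le hβ le_rfl hxy)
  obtain ⟨v, hv⟩ := cauchySeq_tendsto_of_complete hcauchy
  refine tendsto_nhds_limUnder ⟨v, (tendsto_add_atTop_iff_nat N).1 ?_⟩
  simpa only [add_comm] using hv

lemma norm_dyadicApprox_sub_dyadicLimit_le (hf : DyadicControl f κ ρ β N) (hβ : 0 < β)
    (hxy : ‖y - x‖ ≤ ρ) (hm : N ≤ m) :
    ‖dyadicApprox f m x y - dyadicLimit f x y‖
      ≤ 4 * κ * chainWeight β (‖y - x‖ + 3 * δ[m]) δ[m] / (1 - (1 / 2 : ℝ) ^ (β / 2)) := by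
  have hlim : Tendsto (fun k => dyadicApprox f (m + k) x y) atTop (𝓝 (dyadicLimit f x y)) := by
    simpa only [add_comm] using
      (tendsto_add_atTop_iff_nat m).2 (hf.tendsto_dyadicLimit hβ hxy)
  simpa [dist_eq_norm] using dist_le_of_le_geometric_of_tendsto _ _ (half_rpow_half_lt_one hβ)
    (hf.dist_dyadicApprox_add_le hβ hm hxy) hlim 0

theorem norm_dyadicLimit_le (hf : DyadicControl f κ ρ β N) (hβ : 0 < β) (hxy : ‖y - x‖ ≤ ρ)
    (hne : 0 < ‖y - x‖) :
    ‖dyadicLimit f x y‖ ≤ κ * chainConst β * ‖y - x‖ ^ β := by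
  have hκ := hf.nonneg
  have hratio := sub_pos.2 (half_rpow_half_lt_one hβ)
  obtain ⟨m, hm, hδ, happrox⟩ := hf.exists_norm_dyadicApprox_le hβ hxy hne
  have hweight : chainWeight β (‖y - x‖ + 3 * δ[m]) δ[m] ≤ (5 * ‖y - x‖) ^ β := by
    calc chainWeight β (‖y - x‖ + 3 * δ[m]) δ[m] ≤ ((5 * ‖y - x‖) ^ 2) ^ (β / 2) := by
          unfold chainWeight; gcongr; nlinarith [show (0 : ℝ) < δ[m] by positivity]
      _ = (5 * ‖y - x‖) ^ β := by
          rw [← Real.rpow_natCast_mul (by positivity)]; congr 1; push_cast; ring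
  calc ‖dyadicLimit f x y‖
      ≤ ‖dyadicApprox f m x y‖ + ‖dyadicApprox f m x y - dyadicLimit f x y‖ := by
        simpa using norm_sub_le (dyadicApprox f m x y) (dyadicApprox f m x y - dyadicLimit f x y)
    _ ≤ κ * (4 * ‖y - x‖) ^ β
          + 4 * κ * chainWeight β (‖y - x‖ + 3 * δ[m]) δ[m] / (1 - (1 / 2 : ℝ) ^ (β / 2)) :=
        add_le_add happrox (hf.norm_dyadicApprox_sub_dyadicLimit_le hβ hxy hm)
    _ ≤ κ * (5 * ‖y - x‖) ^ β
          + 4 * κ * (5 * ‖y - x‖) ^ β / (1 - (1 / 2 : ℝ) ^ (β / 2)) := by gcongr; norm_num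
    _ = _ := by rw [Real.mul_rpow (by norm_num) hne.le, chainConst]; ring

lemma norm_dyadicLimit_sub_dyadicLimit_le (hf : DyadicControl f κ ρ β N) (hβ : 0 < β)
    (hm : N ≤ m) {x' y' : ι → ℝ} (hxy : ‖y - x‖ ≤ ρ) (hxy' : ‖y' - x'‖ ≤ ρ)
    (hx : ‖x' - x‖ ≤ δ[m]) (hy : ‖y' - y‖ ≤ δ[m]) :
    ‖dyadicLimit f x' y' - dyadicLimit f x y‖
      ≤ 4 * κ * (1 + 2 / (1 - (1 / 2 : ℝ) ^ (β / 2))) * chainWeight β (ρ + 3 * δ[m]) δ[m] := by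
  have hκ := hf.nonneg
  have hδ : (0 : ℝ) < δ[m] := by positivity
  have hδN := half_pow_le_half_pow hm
  have hratio := sub_pos.2 (half_rpow_half_lt_one hβ)
  have hlen := norm_dyadicPoint_dyadicFloor_sub_dyadicPoint_dyadicFloor_le m x y
  have hstep : ‖dyadicApprox f m x' y' - dyadicApprox f m x y‖
      ≤ 4 * κ * chainWeight β (ρ + 3 * δ[m]) δ[m] := by
    refine (hf.norm_sub_le_of_near hβ hm (norm_dyadicFloor_sub_le_one hx)
      (norm_dyadicFloor_sub_le_one hy) (by linarith)).trans ?_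
    gcongr
    exact chainWeight_mono hβ (by positivity) hδ.le (by linarith) le_rfl
  have herr : ∀ {u v : ι → ℝ}, ‖v - u‖ ≤ ρ → ‖dyadicApprox f m u v - dyadicLimit f u v‖
      ≤ 4 * κ * chainWeight β (ρ + 3 * δ[m]) δ[m] / (1 - (1 / 2 : ℝ) ^ (β / 2)) := by
    intro u v huv
    refine (hf.norm_dyadicApprox_sub_dyadicLimit_le hβ huv hm).trans ?_
    gcongr
    exact chainWeight_mono hβ (by positivity) hδ.le (by linarith) le_rfl
  have hsplit : dyadicLimit f x' y' - dyadicLimit f x y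
      = (dyadicApprox f m x' y' - dyadicApprox f m x y)
        - (dyadicApprox f m x' y' - dyadicLimit f x' y')
        + (dyadicApprox f m x y - dyadicLimit f x y) := by abel
  rw [hsplit]
  calc _ ≤ _ := (norm_add_le _ _).trans (add_le_add_left (norm_sub_le _ _) _)
    _ ≤ _ := add_le_add (add_le_add hstep (herr hxy')) (herr hxy)
    _ = _ := by ring

theorem continuousOn_dyadicLimit (hf : DyadicControl f κ ρ β N) (hβ : 0 < β) :
    ContinuousOn (fun q : (ι → ℝ) × (ι → ℝ) => dyadicLimit f q.1 q.2) {q | ‖q.2 - q.1‖ < ρ} := by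
  have hmodulus : Tendsto (fun m : ℕ => 4 * κ * (1 + 2 / (1 - (1 / 2 : ℝ) ^ (β / 2)))
      * chainWeight β (ρ + 3 * δ[m]) δ[m]) atTop (𝓝 0) := by
    have hmesh : Tendsto (fun m : ℕ => δ[m]) atTop (𝓝 0) :=
      tendsto_pow_atTop_nhds_zero_of_lt_one (by norm_num) (by norm_num)
    have hcont : Continuous fun δ : ℝ => 4 * κ * (1 + 2 / (1 - (1 / 2 : ℝ) ^ (β / 2)))
        * chainWeight β (ρ + 3 * δ) δ := by
      unfold chainWeight
      exact continuous_const.mul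
        (Continuous.rpow_const (by fun_prop) fun _ => Or.inr (by positivity))
    refine (hcont.tendsto' 0 0 ?_).comp hmesh
    rw [chainWeight, mul_zero, Real.zero_rpow (by positivity), mul_zero]
  intro q hq
  rw [ContinuousWithinAt, tendsto_iff_norm_sub_tendsto_zero]
  refine Metric.tendsto_nhds.2 fun ε hε => ?_
  obtain ⟨m, hmε, hm⟩ :=
    ((hmodulus.eventually (gt_mem_nhds hε)).and (eventually_ge_atTop N)).exists
  filter_upwards [self_mem_nhdsWithin,
    mem_nhdsWithin_of_mem_nhds (Metric.closedBall_mem_nhds q (by positivity : (0 : ℝ) < δ[m]))]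
    with q' hq' hdist
  rw [Metric.mem_closedBall, Prod.dist_eq, max_le_iff, dist_eq_norm, dist_eq_norm] at hdist
  rw [dist_zero_right, norm_norm]
  exact (hf.norm_dyadicLimit_sub_dyadicLimit_le hβ hm hq.le hq'.le hdist.1 hdist.2).trans_lt hmε

end DyadicControl

end Chaining

section GridIndices

variable {ι : Type*} [Fintype ι]

open Classical in
/-- The grid points of mesh `2⁻ⁿ` in the unit cube `[0, 1)^ι`, by their coordinates: they represent
the grid modulo the integer lattice. -/
def latticeCell (n : ℕ) : Finset (ι → ℤ) := Fintype.piFinset fun _ => Finset.Ico 0 (2 ^ n)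

open Classical in
/-- The integer vectors of sup norm at most `m`. -/
def latticeBox (m : ℕ) : Finset (ι → ℤ) := Fintype.piFinset fun _ => Finset.Icc (-m) m

lemma card_latticeCell (n : ℕ) :
    (latticeCell n : Finset (ι → ℤ)).card = (2 ^ n) ^ Fintype.card ι := by
  classical
  simp only [latticeCell, Fintype.card_piFinset, Int.card_Ico, sub_zero, Finset.prod_const,
    Finset.card_univ]
  norm_cast

lemma card_latticeBox (m : ℕ) :
    (latticeBox m : Finset (ι → ℤ)).card = (2 * m + 1) ^ Fintype.card ι := by
  simp only [latticeBox, Fintype.card_piFinset, Int.card_Icc, Finset.prod_const, Finset.card_univ]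
  congr 1; omega

lemma mem_latticeBox {m : ℕ} {a : ι → ℤ} : a ∈ latticeBox m ↔ ‖a‖ ≤ m := by
  simp only [latticeBox, Fintype.mem_piFinset, Finset.mem_Icc, norm_intVector_le_iff, abs_le]

open Classical in
/-- The grid points of mesh `2⁻ⁿ` and sup norm at most `R`, by their coordinates; the restriction to
the unit cube makes the set finite by construction. -/
def dyadicBall (n : ℕ) (R : ℝ) : Finset (ι → ℤ) :=
  (latticeBox (2 ^ n)).filter fun a => ‖dyadicPoint n a‖ ≤ R

lemma mem_dyadicBall {n : ℕ} {R : ℝ} (hR : R ≤ 1) {a : ι → ℤ} :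
    a ∈ dyadicBall n R ↔ ‖dyadicPoint n a‖ ≤ R := by
  rw [dyadicBall, Finset.mem_filter, and_iff_right_iff_imp, mem_latticeBox]
  intro ha
  have hunit : ‖a‖ * δ[n] ≤ 1 := norm_dyadicPoint n a ▸ ha.trans hR
  rw [one_div, inv_pow, ← div_eq_mul_inv, div_le_one (by positivity)] at hunit
  exact_mod_cast hunit

lemma card_dyadicBall_le (n : ℕ) (R : ℝ) :
    (dyadicBall n R : Finset (ι → ℤ)).card ≤ (3 * 2 ^ n) ^ Fintype.card ι := by
  refine (Finset.card_filter_le _ _).trans ((card_latticeBox _).trans_le ?_)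
  gcongr
  have := Nat.one_le_two_pow (n := n)
  omega

lemma card_latticeCell_product_dyadicBall_le (n : ℕ) (R : ℝ) :
    (latticeCell (ι := ι) n ×ˢ dyadicBall (ι := ι) n R).card
      ≤ 3 ^ Fintype.card ι * (2 ^ n) ^ (2 * Fintype.card ι) := by
  rw [Finset.card_product, card_latticeCell]
  calc _ ≤ (2 ^ n) ^ Fintype.card ι * (3 * 2 ^ n) ^ Fintype.card ι :=
        Nat.mul_le_mul_left _ (card_dyadicBall_le n R)
    _ = _ := by rw [mul_pow 3, two_mul, pow_add]; ring

lemma exists_mem_latticeCell_add_smul (n : ℕ) (a : ι → ℤ) :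
    ∃ b ∈ latticeCell n, ∃ k, a = b + (2 ^ n : ℤ) • k := by
  classical
  refine ⟨fun i => a i % 2 ^ n, Fintype.mem_piFinset.2 fun i => Finset.mem_Ico.2
    ⟨Int.emod_nonneg _ (by positivity), Int.emod_lt_of_pos _ (by positivity)⟩,
    fun i => a i / 2 ^ n, funext fun i => ?_⟩
  exact (Int.emod_add_mul_ediv (a i) (2 ^ n)).symm

end GridIndices

section Moments

variable {Ω : Type*} [MeasurableSpace Ω] {P : Measure Ω} {p : ℝ}

lemma lintegral_ofReal_max_rpow_le (hp : 0 < p) {K₁ K₂ : Ω → ℝ} (hK₁ : Measurable K₁) :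
    ∫⁻ ω, ENNReal.ofReal (max (K₁ ω) (K₂ ω)) ^ p ∂P
      ≤ ∫⁻ ω, ENNReal.ofReal (K₁ ω) ^ p ∂P + ∫⁻ ω, ENNReal.ofReal (K₂ ω) ^ p ∂P := by
  rw [← lintegral_add_left (hK₁.ennreal_ofReal.pow_const p)]
  refine lintegral_mono fun ω => ?_
  rw [ENNReal.ofReal_max, (ENNReal.monotone_rpow_of_nonneg hp.le).map_max]
  exact max_le_add_of_nonneg zero_le zero_le

variable {V : Type*} [NormedAddCommGroup V] [MeasurableSpace V] [BorelSpace V]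

theorem exists_ae_forall_norm_le_mul {I : Type*} [Countable I] (hp : 0 < p) {X : I → Ω → V}
    (hX : ∀ i, Measurable (X i)) {c w : I → ℝ} (hw : ∀ i, 0 < w i)
    (hmoment : ∀ i, ∫⁻ ω, ‖X i ω‖ₑ ^ p ∂P ≤ ENNReal.ofReal (c i * w i ^ p))
    (hsum : ∑' i, ENNReal.ofReal (c i) ≠ ⊤) :
    ∃ K : Ω → ℝ, Measurable K ∧
      ∫⁻ ω, ENNReal.ofReal (K ω) ^ p ∂P ≤ ∑' i, ENNReal.ofReal (c i) ∧
      ∀ᵐ ω ∂P, ∀ i, ‖X i ω‖ ≤ K ω * w i := by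
  set S : Ω → ℝ≥0∞ := fun ω => ⨆ i, ‖X i ω‖ₑ / ENNReal.ofReal (w i) with hS
  have hterm : ∀ i, Measurable fun ω => ‖X i ω‖ₑ / ENNReal.ofReal (w i) := fun i =>
    (hX i).enorm.div_const _
  have hSmeas : Measurable S := Measurable.iSup hterm
  have hSmoment : ∫⁻ ω, S ω ^ p ∂P ≤ ∑' i, ENNReal.ofReal (c i) := by
    calc ∫⁻ ω, S ω ^ p ∂P ≤ ∫⁻ ω, ∑' i, (‖X i ω‖ₑ / ENNReal.ofReal (w i)) ^ p ∂P := by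
          refine lintegral_mono fun ω => ?_
          rw [← ENNReal.orderIsoRpow_apply p hp, hS, OrderIso.map_iSup]
          exact iSup_le fun i => ENNReal.le_tsum (f := fun i => (‖X i ω‖ₑ / _) ^ p) i
      _ = ∑' i, ∫⁻ ω, (‖X i ω‖ₑ / ENNReal.ofReal (w i)) ^ p ∂P :=
          lintegral_tsum fun i => ((hterm i).pow_const p).aemeasurable
      _ ≤ ∑' i, ENNReal.ofReal (c i) := ENNReal.tsum_le_tsum fun i => ?_
    have hwi : ENNReal.ofReal (w i ^ p) ≠ 0 := by simpa using Real.rpow_pos_of_pos (hw i) p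
    have hdiv : ∀ ω, (‖X i ω‖ₑ / ENNReal.ofReal (w i)) ^ p
        = ‖X i ω‖ₑ ^ p * (ENNReal.ofReal (w i ^ p))⁻¹ := fun ω => by
      rw [ENNReal.div_rpow_of_nonneg _ _ hp.le, ENNReal.ofReal_rpow_of_pos (hw i), div_eq_mul_inv]
    simp only [hdiv]
    rw [lintegral_mul_const' _ _ (ENNReal.inv_ne_top.2 hwi), ← div_eq_mul_inv,
      ENNReal.div_le_iff hwi ENNReal.ofReal_ne_top,
      ← ENNReal.ofReal_mul' (Real.rpow_nonneg (hw i).le p)]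
    exact hmoment i
  have hfinite : ∀ᵐ ω ∂P, S ω ≠ ⊤ := by
    filter_upwards [ae_lt_top (hSmeas.pow_const p) (ne_top_of_le_ne_top hsum hSmoment)] with ω hω
    exact fun h => hω.ne (by rw [h, ENNReal.top_rpow_of_pos hp])
  refine ⟨fun ω => (S ω).toReal, hSmeas.ennreal_toReal, (lintegral_mono fun ω => ?_).trans hSmoment,
    ?_⟩
  · exact ENNReal.rpow_le_rpow ENNReal.ofReal_toReal_le hp.le
  · filter_upwards [hfinite] with ω hω i
    have hle : ‖X i ω‖ₑ ≤ S ω * ENNReal.ofReal (w i) :=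
      (ENNReal.div_le_iff (by simpa using hw i) ENNReal.ofReal_ne_top).1
        (le_iSup (fun i => ‖X i ω‖ₑ / ENNReal.ofReal (w i)) i)
    simpa [(hw i).le] using
      ENNReal.toReal_mono (ENNReal.mul_ne_top hω ENNReal.ofReal_ne_top) hle

theorem exists_ae_forall_norm_le_mul_of_geometric {J : Type*} (hp : 0 < p) (S : ℕ → Finset J)
    {X : ℕ → J → Ω → V} {c : ℕ → ℝ} {w : ℕ → J → ℝ} (hX : ∀ n, ∀ j ∈ S n, Measurable (X n j))
    (hw : ∀ n, ∀ j ∈ S n, 0 < w n j)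
    (hmoment : ∀ n, ∀ j ∈ S n,
      ∫⁻ ω, ‖X n j ω‖ₑ ^ p ∂P ≤ ENNReal.ofReal (c n * w n j ^ p))
    {B θ : ℝ} (hθ₀ : 0 ≤ θ) (hθ₁ : θ < 1) (hB : 0 ≤ B)
    (hcount : ∀ n, (S n).card * c n ≤ B * θ ^ n) :
    ∃ K : Ω → ℝ, Measurable K ∧
      ∫⁻ ω, ENNReal.ofReal (K ω) ^ p ∂P ≤ ENNReal.ofReal (B / (1 - θ)) ∧
      ∀ᵐ ω ∂P, ∀ n, ∀ j ∈ S n, ‖X n j ω‖ ≤ K ω * w n j := by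
  have hsum : ∑' i : Σ n, S n, ENNReal.ofReal (c i.1) ≤ ENNReal.ofReal (B / (1 - θ)) := by
    calc ∑' i : Σ n, S n, ENNReal.ofReal (c i.1)
        = ∑' n, (S n).card * ENNReal.ofReal (c n) := by
          simp [ENNReal.tsum_sigma']
      _ ≤ ∑' n, ENNReal.ofReal (B * θ ^ n) := ENNReal.tsum_le_tsum fun n => by
          rw [← ENNReal.ofReal_natCast, ← ENNReal.ofReal_mul (by positivity)]
          exact ENNReal.ofReal_le_ofReal (hcount n)
      _ = ENNReal.ofReal (B / (1 - θ)) := by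
          rw [← ENNReal.ofReal_tsum_of_nonneg (fun n => by positivity)
            ((summable_geometric_of_lt_one hθ₀ hθ₁).mul_left B), tsum_mul_left,
            tsum_geometric_of_lt_one hθ₀ hθ₁, div_eq_mul_inv]
  obtain ⟨K, hK, hKmoment, hXK⟩ := exists_ae_forall_norm_le_mul (P := P) hp
    (X := fun i : Σ n, S n => X i.1 i.2) (fun i => hX _ _ i.2.2)
    (fun i => hw _ _ i.2.2) (fun i => hmoment _ _ i.2.2) (ne_top_of_le_ne_top (by simp) hsum)
  refine ⟨K, hK, hKmoment.trans hsum, ?_⟩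
  filter_upwards [hXK] with ω hω n j hj using hω ⟨n, j, hj⟩

theorem exists_ae_forall_grid_norm_le_mul {ι J : Type*} [Fintype ι] (hp : 0 < p) (N : ℕ)
    (T : ℕ → Finset J) {X : ℕ → (ι → ℤ) → J → Ω → V} {c : ℕ → ℝ} {w : ℕ → J → ℝ}
    (hX : ∀ n, N ≤ n → ∀ a, ∀ j ∈ T n, Measurable (X n a j))
    (hperiodic : ∀ n a k j, X n (a + (2 ^ n : ℤ) • k) j = X n a j)
    (hw : ∀ n, ∀ j ∈ T n, 0 < w n j)
    (hmoment : ∀ n, N ≤ n → ∀ a, ∀ j ∈ T n,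
      ∫⁻ ω, ‖X n a j ω‖ₑ ^ p ∂P ≤ ENNReal.ofReal (c n * w n j ^ p))
    {B θ : ℝ} (hθ₀ : 0 ≤ θ) (hθ₁ : θ < 1) (hB : 0 ≤ B)
    (hcount : ∀ k, (2 ^ (N + k)) ^ Fintype.card ι * (T (N + k)).card * c (N + k) ≤ B * θ ^ k) :
    ∃ K : Ω → ℝ, Measurable K ∧
      ∫⁻ ω, ENNReal.ofReal (K ω) ^ p ∂P ≤ ENNReal.ofReal (B / (1 - θ)) ∧
      ∀ᵐ ω ∂P, ∀ n, N ≤ n → ∀ a, ∀ j ∈ T n, ‖X n a j ω‖ ≤ K ω * w n j := by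
  obtain ⟨K, hK, hKmoment, hXK⟩ := exists_ae_forall_norm_le_mul_of_geometric (P := P) hp
    (fun k => latticeCell (N + k) ×ˢ T (N + k)) (X := fun k j => X (N + k) j.1 j.2)
    (c := fun k => c (N + k)) (w := fun k j => w (N + k) j.2)
    (fun k j hj => hX _ (Nat.le_add_right N k) _ _ (Finset.mem_product.1 hj).2)
    (fun k j hj => hw _ _ (Finset.mem_product.1 hj).2)
    (fun k j hj => hmoment _ (Nat.le_add_right N k) _ _ (Finset.mem_product.1 hj).2)
    hθ₀ hθ₁ hB (fun k => by
      rw [Finset.card_product, card_latticeCell]; exact_mod_cast hcount k)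
  refine ⟨K, hK, hKmoment, ?_⟩
  filter_upwards [hXK] with ω hω n hn a j hj
  obtain ⟨k, rfl⟩ := Nat.exists_eq_add_of_le hn
  obtain ⟨b, hb, l, rfl⟩ := exists_mem_latticeCell_add_smul (N + k) a
  rw [hperiodic]
  exact hω k (b, j) (Finset.mk_mem_product hb hj)

lemma ae_eq_zero_of_lintegral_enorm_rpow_le_zero (hp : 0 < p) {X : Ω → V}
    (hX : Measurable X) (hmoment : ∫⁻ ω, ‖X ω‖ₑ ^ p ∂P ≤ 0) :
    ∀ᵐ ω ∂P, X ω = 0 := by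
  filter_upwards [(lintegral_eq_zero_iff (hX.enorm.pow_const p)).1
    (nonpos_iff_eq_zero.1 hmoment)] with ω hω
  simpa [hp] using hω

lemma ae_tendsto_zero_of_tsum_moment_ne_top (hp : 0 < p) {X : ℕ → Ω → V}
    (hX : ∀ n, Measurable (X n))
    (hmoment : ∑' n, ∫⁻ ω, ‖X n ω‖ₑ ^ p ∂P ≠ ⊤) :
    ∀ᵐ ω ∂P, Tendsto (fun n => X n ω) atTop (𝓝 0) := by
  have hmeas : ∀ n, Measurable fun ω => ‖X n ω‖ₑ ^ p :=
    fun n => (hX n).enorm.pow_const p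
  rw [← lintegral_tsum fun n => (hmeas n).aemeasurable] at hmoment
  filter_upwards [ae_lt_top (Measurable.tsum hmeas) hmoment] with ω hω
  have hpow := ((ENNReal.continuous_rpow_const (y := p⁻¹)).tendsto 0).comp
    (ENNReal.tendsto_atTop_zero_of_tsum_ne_top hω.ne)
  rw [ENNReal.zero_rpow_of_pos (inv_pos.2 hp)] at hpow
  simpa only [tendsto_zero_iff_enorm_tendsto_zero, Function.comp_def,
    ENNReal.rpow_rpow_inv hp.ne'] using hpow

end Moments

section TwoPointMoments

variable {ι Ω V : Type*} [Fintype ι] [MeasurableSpace Ω] [NormedAddCommGroup V] [MeasurableSpace V]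

/-- The moment assumptions of the continuity criterion, in coordinates: `F x y` is the value of the
process on the segment from `x` to `y`, invariant under the integer lattice, and the area of a
triangle is replaced by the product of two of its sides, all measured in the sup norm. -/
structure TwoPointMoments (P : Measure Ω) (F : (ι → ℝ) → (ι → ℝ) → Ω → V) (p α r s M : ℝ) :
    Prop where
  measurable : ∀ x y, ‖y - x‖ ≤ r → Measurable (F x y)
  segment : ∀ x y, ‖y - x‖ ≤ r → ∫⁻ ω, ‖F x y ω‖ₑ ^ p ∂P ≤ ENNReal.ofReal (M * ‖y - x‖ ^ (p * α))
  triangle : ∀ x y z, ‖y - x‖ ≤ r → ‖z - y‖ ≤ r → ‖z - x‖ ≤ r → ‖y - x‖ * ‖z - y‖ ≤ s →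
    ∫⁻ ω, ‖triangleBoundary (fun x y => F x y ω) x y z‖ₑ ^ p ∂P
      ≤ ENNReal.ofReal (M * (‖y - x‖ * ‖z - y‖) ^ (p * (α / 2)))
  periodic : ∀ x y k, F (x + dyadicPoint 0 k) (y + dyadicPoint 0 k) = F x y

lemma rpow_mul_le_rpow_mul_rpow {p α β t u v : ℝ} (hp : 0 < p) (hα : 0 ≤ α) (hβα : β ≤ α)
    (ht : 0 ≤ t) (hu : 0 < u) (htu : t ≤ u) (huv : u ≤ v) :
    t ^ (p * α) ≤ v ^ (p * (α - β)) * (u ^ β) ^ p := by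
  have : 0 ≤ α - β := sub_nonneg.2 hβα
  calc t ^ (p * α) ≤ u ^ (p * α) := by gcongr
    _ = u ^ (p * (α - β)) * (u ^ β) ^ p := by
        rw [← Real.rpow_mul hu.le, ← Real.rpow_add hu]; ring_nf
    _ ≤ v ^ (p * (α - β)) * (u ^ β) ^ p := by gcongr

lemma two_pow_pow_mul_half_pow_rpow_le (N k : ℕ) {d : ℕ} {γ : ℝ} (hγ : d < γ) :
    ((2 : ℝ) ^ (N + k)) ^ d * δ[N + k] ^ γ ≤ ((1 / 2 : ℝ) ^ (γ - d)) ^ k := by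
  have hpow : ((2 : ℝ) ^ (N + k)) ^ d * δ[N + k] ^ γ = ((1 / 2 : ℝ) ^ (γ - d)) ^ (N + k) := by
    rw [Real.rpow_sub_natCast (by norm_num), ← Real.rpow_pow_comm (by norm_num), div_pow (_ ^ γ),
      pow_right_comm, one_div, inv_pow, inv_pow, div_inv_eq_mul, mul_comm]
  rw [hpow]
  exact pow_le_pow_of_le_one (by positivity)
    (Real.rpow_le_one (by norm_num) (by norm_num) (sub_nonneg.2 hγ.le)) (Nat.le_add_left k N)

lemma card_dyadicBall_product_latticeBox_mul_le (N k : ℕ) (R : ℝ) {γ M : ℝ} (hM : 0 ≤ M)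
    (hγ : (2 * Fintype.card ι : ℕ) < γ) :
    ((2 : ℝ) ^ (N + k)) ^ Fintype.card ι
        * (dyadicBall (ι := ι) (N + k) R ×ˢ latticeBox (ι := ι) 1).card * (M * δ[N + k] ^ γ)
      ≤ 9 ^ Fintype.card ι * M * ((1 / 2 : ℝ) ^ (γ - (2 * Fintype.card ι : ℕ))) ^ k := by
  have hcard : ((dyadicBall (ι := ι) (N + k) R ×ˢ latticeBox (ι := ι) 1).card : ℝ)
      ≤ (3 * 2 ^ (N + k)) ^ Fintype.card ι * 3 ^ Fintype.card ι := by
    rw [Finset.card_product, card_latticeBox]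
    exact_mod_cast Nat.mul_le_mul_right _ (card_dyadicBall_le _ _)
  calc _ ≤ ((2 : ℝ) ^ (N + k)) ^ Fintype.card ι
        * ((3 * 2 ^ (N + k)) ^ Fintype.card ι * 3 ^ Fintype.card ι) * (M * δ[N + k] ^ γ) := by
        gcongr
    _ = 9 ^ Fintype.card ι * M
          * (((2 : ℝ) ^ (N + k)) ^ (2 * Fintype.card ι) * δ[N + k] ^ γ) := by
        rw [mul_pow 3, two_mul, pow_add, show (9 : ℝ) = 3 * 3 by norm_num, mul_pow 3 3]
        ring
    _ ≤ _ := by gcongr; exact two_pow_pow_mul_half_pow_rpow_le N k hγ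

/-- The constant of the moment bound for the random constant of a `DyadicControl`: the three
summands come from the short segments, the triangles and the segments on the coarsest grid. -/
def momentConst (d : ℕ) (p α β : ℝ) : ℝ :=
  3 ^ d / (1 - (1 / 2 : ℝ) ^ (p * (α - β) - d))
    + 9 ^ d / (1 - (1 / 2 : ℝ) ^ (p * (α / 2 - β / 2) - (2 * d : ℕ))) + 3 ^ d

lemma one_sub_half_rpow_pos {γ : ℝ} (hγ : 0 < γ) : 0 < 1 - (1 / 2 : ℝ) ^ γ :=
  sub_pos.2 (Real.rpow_lt_one (by norm_num) (by norm_num) hγ)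

lemma ofReal_add_add_le_momentConst_mul {d : ℕ} {p α β M X Y : ℝ} (hM : 0 ≤ M) (hX : 0 ≤ X)
    (hY : 0 ≤ Y) (hγ : 4 * d < p * (α - β)) :
    ENNReal.ofReal (3 ^ d * M / (1 - (1 / 2 : ℝ) ^ (p * (α - β) - d)))
        + (ENNReal.ofReal (9 ^ d * M / (1 - (1 / 2 : ℝ) ^ (p * (α / 2 - β / 2) - (2 * d : ℕ))))
          + ENNReal.ofReal (3 ^ d * X * (M * Y)))
      ≤ ENNReal.ofReal (momentConst d p α β * (M * (X * Y + 1))) := by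
  have : (0 : ℝ) ≤ d := d.cast_nonneg
  have hθ₁ := one_sub_half_rpow_pos (γ := p * (α - β) - d) (by linarith)
  have hθ₂ := one_sub_half_rpow_pos (γ := p * (α / 2 - β / 2) - (2 * d : ℕ))
    (by push_cast; linarith)
  rw [← ENNReal.ofReal_add (by positivity) (by positivity),
    ← ENNReal.ofReal_add (by positivity) (by positivity), momentConst, add_mul, add_mul,
    ← add_assoc, mul_div_right_comm, mul_div_right_comm, mul_assoc (3 ^ d) X, mul_left_comm X]
  have hXY : X * Y ≤ X * Y + 1 := by linarith
  have hM_le : M ≤ M * (X * Y + 1) := le_mul_of_one_le_right hM (by nlinarith)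
  gcongr

lemma momentConst_pos {d : ℕ} {p α β : ℝ} (hγ : 4 * d < p * (α - β)) :
    0 < momentConst d p α β := by
  have : (0 : ℝ) ≤ d := d.cast_nonneg
  have hθ₁ := one_sub_half_rpow_pos (γ := p * (α - β) - d) (by linarith)
  have hθ₂ := one_sub_half_rpow_pos (γ := p * (α / 2 - β / 2) - (2 * d : ℕ))
    (by push_cast; linarith)
  unfold momentConst
  positivity

namespace TwoPointMoments

variable {P : Measure Ω} {F : (ι → ℝ) → (ι → ℝ) → Ω → V} {p α β r s M ρ : ℝ} {N : ℕ}

lemma apply_dyadicPoint_add_smul (hF : TwoPointMoments P F p α r s M) (n : ℕ) (a b k : ι → ℤ) :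
    F (dyadicPoint n (a + (2 ^ n : ℤ) • k)) (dyadicPoint n (b + (2 ^ n : ℤ) • k))
      = F (dyadicPoint n a) (dyadicPoint n b) := by
  have hlattice : dyadicPoint n ((2 ^ n : ℤ) • k) = dyadicPoint 0 k := by
    rw [← dyadicPoint_add_smul 0 n, zero_add]
  rw [map_add, map_add, hlattice, hF.periodic]

lemma lintegral_triangleBoundary_le_chainWeight (hF : TwoPointMoments P F p α r s M) (hp : 0 < p)
    (hM : 0 ≤ M) (hβ : 0 ≤ β) (hβα : β ≤ α) {x y z : ι → ℝ} {h : ℝ} (hh : 0 < h) (hhs : h ≤ s)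
    (hr : r ≤ 1) (hxy : ‖y - x‖ + h ≤ r) (hyz : ‖z - y‖ ≤ h) :
    ∫⁻ ω, ‖triangleBoundary (fun x y => F x y ω) x y z‖ₑ ^ p ∂P
      ≤ ENNReal.ofReal (M * h ^ (p * (α / 2 - β / 2)) * chainWeight β ‖y - x‖ h ^ p) := by
  have hL := norm_nonneg (y - x)
  have hxz : ‖z - x‖ ≤ ‖z - y‖ + ‖y - x‖ := norm_sub_le_norm_sub_add_norm_sub _ _ _
  have harea : ‖y - x‖ * ‖z - y‖ ≤ (‖y - x‖ + h) * h := by gcongr; linarith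
  have harea_le : (‖y - x‖ + h) * h ≤ h := mul_le_of_le_one_left hh.le (hxy.trans hr)
  refine (hF.triangle x y z (by linarith) (by linarith) (by linarith)
    ((harea.trans harea_le).trans hhs)).trans (ENNReal.ofReal_le_ofReal ?_)
  rw [mul_assoc, chainWeight]
  gcongr
  exact rpow_mul_le_rpow_mul_rpow hp (by linarith) (by linarith) (by positivity) (by positivity)
    harea harea_le

variable [BorelSpace V]

lemma exists_ae_norm_short_le (hF : TwoPointMoments P F p α r s M) (hp : 0 < p) (hM : 0 ≤ M)
    (hβ : 0 < β) (hγ : Fintype.card ι < p * (α - β)) (hN : δ[N] ≤ r) :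
    ∃ K : Ω → ℝ, Measurable K ∧
      ∫⁻ ω, ENNReal.ofReal (K ω) ^ p ∂P ≤ ENNReal.ofReal
        (3 ^ Fintype.card ι * M / (1 - (1 / 2 : ℝ) ^ (p * (α - β) - Fintype.card ι))) ∧
      ∀ᵐ ω ∂P, ∀ n, N ≤ n → ∀ a, ∀ e ∈ latticeBox 1,
        ‖F (dyadicPoint n a) (dyadicPoint n (a + e)) ω‖ ≤ K ω * δ[n] ^ β := by
  have hβα : β < α :=
    sub_pos.1 (pos_of_mul_pos_right ((Nat.cast_nonneg _).trans_lt hγ) hp.le)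
  have hθ : (1 / 2 : ℝ) ^ (p * (α - β) - Fintype.card ι) < 1 :=
    Real.rpow_lt_one (by norm_num) (by norm_num) (sub_pos.2 hγ)
  have hlen : ∀ (n : ℕ) (a : ι → ℤ), ∀ e ∈ latticeBox 1,
      ‖dyadicPoint n (a + e) - dyadicPoint n a‖ ≤ δ[n] := fun n a e he =>
    norm_dyadicPoint_sub_le_of_norm_sub_le_one n (by simpa using mem_latticeBox.1 he)
  have hlen_le : ∀ n, N ≤ n → ∀ a : ι → ℤ, ∀ e ∈ latticeBox 1,
      ‖dyadicPoint n (a + e) - dyadicPoint n a‖ ≤ r := fun n hn a e he =>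
    ((hlen n a e he).trans (half_pow_le_half_pow hn)).trans hN
  refine exists_ae_forall_grid_norm_le_mul hp N (fun _ => latticeBox 1)
    (X := fun n a e => F (dyadicPoint n a) (dyadicPoint n (a + e)))
    (c := fun n => M * δ[n] ^ (p * (α - β))) (w := fun n _ => δ[n] ^ β)
    (fun n hn a e he => hF.measurable _ _ (hlen_le n hn a e he))
    (fun n a k e => by rw [add_right_comm, hF.apply_dyadicPoint_add_smul])
    (fun n e _ => by positivity) (fun n hn a e he => ?_) (by positivity) hθ (by positivity)
    (fun k => ?_)
  · refine (hF.segment _ _ (hlen_le n hn a e he)).trans (ENNReal.ofReal_le_ofReal ?_)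
    rw [mul_assoc]
    gcongr
    exact rpow_mul_le_rpow_mul_rpow hp (hβ.trans hβα).le hβα.le (norm_nonneg _) (by positivity)
      (hlen n a e he) le_rfl
  · rw [card_latticeBox]
    calc _ = 3 ^ Fintype.card ι * M
          * (((2 : ℝ) ^ (N + k)) ^ Fintype.card ι * δ[N + k] ^ (p * (α - β))) := by
          push_cast; ring
      _ ≤ _ := by gcongr; exact two_pow_pow_mul_half_pow_rpow_le N k hγ

lemma measurable_triangleBoundary [SecondCountableTopology V] (hF : TwoPointMoments P F p α r s M)
    {x y z : ι → ℝ} (hxyz : ‖y - x‖ + ‖z - y‖ ≤ r) :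
    Measurable fun ω => triangleBoundary (fun x y => F x y ω) x y z := by
  have hxz : ‖z - x‖ ≤ ‖z - y‖ + ‖y - x‖ := norm_sub_le_norm_sub_add_norm_sub _ _ _
  rw [norm_sub_rev] at hxz
  exact ((hF.measurable x y (by linarith [norm_nonneg (z - y)])).add
    (hF.measurable y z (by linarith [norm_nonneg (y - x)]))).add (hF.measurable z x (by linarith))

lemma exists_ae_norm_triangle_le [SecondCountableTopology V] {R : ℝ}
    (hF : TwoPointMoments P F p α r s M) (hp : 0 < p) (hM : 0 ≤ M) (hβ : 0 < β)
    (hγ : 4 * Fintype.card ι < p * (α - β)) (hR : R + δ[N] ≤ r) (hr : r ≤ 1) (hs : δ[N] ≤ s) :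
    ∃ K : Ω → ℝ, Measurable K ∧
      ∫⁻ ω, ENNReal.ofReal (K ω) ^ p ∂P ≤ ENNReal.ofReal (9 ^ Fintype.card ι * M
        / (1 - (1 / 2 : ℝ) ^ (p * (α / 2 - β / 2) - (2 * Fintype.card ι : ℕ)))) ∧
      ∀ᵐ ω ∂P, ∀ n, N ≤ n → ∀ a b c, ‖c - b‖ ≤ 1 → ‖dyadicPoint n b - dyadicPoint n a‖ ≤ R →
        ‖triangleBoundary (fun x y => F x y ω) (dyadicPoint n a) (dyadicPoint n b)
          (dyadicPoint n c)‖ ≤ K ω * chainWeight β ‖dyadicPoint n b - dyadicPoint n a‖ δ[n] := by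
  have hβα : β < α :=
    sub_pos.1 (pos_of_mul_pos_right ((by positivity : (0 : ℝ) ≤ 4 * Fintype.card ι).trans_lt hγ)
      hp.le)
  have hdim : (2 * Fintype.card ι : ℕ) < p * (α / 2 - β / 2) := by push_cast; linarith
  have hθ : (1 / 2 : ℝ) ^ (p * (α / 2 - β / 2) - (2 * Fintype.card ι : ℕ)) < 1 :=
    Real.rpow_lt_one (by norm_num) (by norm_num) (sub_pos.2 hdim)
  have hR1 : R ≤ 1 := by linarith [(by positivity : (0 : ℝ) < δ[N])]
  let T : ℕ → Finset ((ι → ℤ) × (ι → ℤ)) := fun n => dyadicBall n R ×ˢ latticeBox 1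
  let X : ℕ → (ι → ℤ) → (ι → ℤ) × (ι → ℤ) → Ω → V := fun n a j ω =>
    triangleBoundary (fun x y => F x y ω) (dyadicPoint n a) (dyadicPoint n (a + j.1))
      (dyadicPoint n (a + j.1 + j.2))
  have hmemT : ∀ {n j}, j ∈ T n ↔ ‖dyadicPoint n j.1‖ ≤ R ∧ ‖j.2‖ ≤ 1 := fun {n j} => by
    simp only [T, Finset.mem_product, mem_dyadicBall hR1, mem_latticeBox, Nat.cast_one]
  have hfirst : ∀ n a, ∀ j ∈ T n, ‖dyadicPoint n (a + j.1) - dyadicPoint n a‖ ≤ R :=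
    fun n a j hj => (norm_dyadicPoint_add_sub_self n a j.1).trans_le (hmemT.1 hj).1
  have hsecond : ∀ n a, ∀ j ∈ T n,
      ‖dyadicPoint n (a + j.1 + j.2) - dyadicPoint n (a + j.1)‖ ≤ δ[n] := fun n a j hj =>
    norm_dyadicPoint_sub_le_of_norm_sub_le_one n (by simpa using (hmemT.1 hj).2)
  refine (exists_ae_forall_grid_norm_le_mul (P := P) hp N T (X := X)
    (c := fun n => M * δ[n] ^ (p * (α / 2 - β / 2)))
    (w := fun n j => chainWeight β ‖dyadicPoint n j.1‖ δ[n]) (B := 9 ^ Fintype.card ι * M)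
    (fun n hn a j hj => ?_) (fun n a k j => ?_) (fun n j _ => by unfold chainWeight; positivity)
    (fun n hn a j hj => ?_) (by positivity) hθ (by positivity) (fun k => ?_)).imp
    fun K ⟨hK, hKmoment, hXK⟩ => ⟨hK, hKmoment, ?_⟩
  · exact hF.measurable_triangleBoundary (by
      linarith [hfirst n a j hj, hsecond n a j hj, half_pow_le_half_pow hn])
  · simp only [X, triangleBoundary, add_right_comm _ ((2 ^ n : ℤ) • k),
      hF.apply_dyadicPoint_add_smul]
  · have hδ := half_pow_le_half_pow hn
    rw [← norm_dyadicPoint_add_sub_self n a]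
    exact hF.lintegral_triangleBoundary_le_chainWeight hp hM hβ.le hβα.le (by positivity)
      (hδ.trans hs) hr (by linarith [hfirst n a j hj]) (hsecond n a j hj)
  · exact_mod_cast card_dyadicBall_product_latticeBox_mul_le N k R hM hdim
  · filter_upwards [hXK] with ω hω n hn a b c hbc hab
    rw [← map_sub] at hab ⊢
    simpa only [X, add_sub_cancel] using hω n hn a (b - a, c - b) (hmemT.2 ⟨hab, hbc⟩)

lemma exists_ae_norm_coarse_le {R : ℝ} (hF : TwoPointMoments P F p α r s M) (hp : 0 < p)
    (hM : 0 ≤ M) (hβ : 0 < β) (hβα : β ≤ α) (hR : R + δ[N] ≤ r) (hr₀ : 0 ≤ r) (hr₁ : r ≤ 1) :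
    ∃ K : Ω → ℝ, Measurable K ∧
      ∫⁻ ω, ENNReal.ofReal (K ω) ^ p ∂P ≤ ENNReal.ofReal
        (3 ^ Fintype.card ι * ((2 : ℝ) ^ N) ^ (2 * Fintype.card ι) * (M * r ^ (p * (α - β)))) ∧
      ∀ᵐ ω ∂P, ∀ a b, ‖dyadicPoint N b - dyadicPoint N a‖ ≤ R →
        ‖F (dyadicPoint N a) (dyadicPoint N b) ω‖
          ≤ K ω * (‖dyadicPoint N b - dyadicPoint N a‖ + δ[N]) ^ β := by
  have hδ : (0 : ℝ) < δ[N] := by positivity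
  have hmem : ∀ {j}, j ∈ dyadicBall N R ↔ ‖dyadicPoint (ι := ι) N j‖ ≤ R :=
    mem_dyadicBall (by linarith)
  have hside_le : ∀ a, ∀ j ∈ dyadicBall N R,
      ‖dyadicPoint N (a + j) - dyadicPoint (ι := ι) N a‖ ≤ r := fun a j hj =>
    (norm_dyadicPoint_add_sub_self N a j).trans_le (by linarith [hmem.1 hj])
  have hsum : ∑' _ : ↥(latticeCell (ι := ι) N ×ˢ dyadicBall (ι := ι) N R),
      ENNReal.ofReal (M * r ^ (p * (α - β))) ≤ ENNReal.ofReal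
        (3 ^ Fintype.card ι * ((2 : ℝ) ^ N) ^ (2 * Fintype.card ι) * (M * r ^ (p * (α - β)))) := by
    rw [tsum_fintype, Finset.sum_const, Finset.card_univ, Fintype.card_coe, nsmul_eq_mul,
      ← ENNReal.ofReal_natCast, ← ENNReal.ofReal_mul (by positivity)]
    gcongr
    exact_mod_cast card_latticeCell_product_dyadicBall_le N R
  obtain ⟨K, hK, hKmoment, hFK⟩ := exists_ae_forall_norm_le_mul (P := P) hp
    (X := fun j : ↥(latticeCell (ι := ι) N ×ˢ dyadicBall (ι := ι) N R) =>
      F (dyadicPoint N j.1.1) (dyadicPoint N (j.1.1 + j.1.2)))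
    (w := fun j => (‖dyadicPoint N j.1.2‖ + δ[N]) ^ β)
    (fun j => hF.measurable _ _ (hside_le _ _ (Finset.mem_product.1 j.2).2))
    (fun j => by positivity) (c := fun _ => M * r ^ (p * (α - β))) (fun j => by
      have hj := (Finset.mem_product.1 j.2).2
      refine (hF.segment _ _ (hside_le _ _ hj)).trans (ENNReal.ofReal_le_ofReal ?_)
      rw [mul_assoc, norm_dyadicPoint_add_sub_self]
      gcongr
      exact rpow_mul_le_rpow_mul_rpow hp (hβ.le.trans hβα) hβα (norm_nonneg _) (by positivity)
        (by linarith) (by linarith [hmem.1 hj])) (ne_top_of_le_ne_top (by simp) hsum)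
  refine ⟨K, hK, hKmoment.trans hsum, ?_⟩
  filter_upwards [hFK] with ω hω a b hab
  obtain ⟨a', ha', k, rfl⟩ := exists_mem_latticeCell_add_smul N a
  have hωab := hω ⟨(a', b - (a' + (2 ^ N : ℤ) • k)),
    Finset.mk_mem_product ha' (hmem.2 (by rwa [map_sub]))⟩
  simp only [map_sub] at hωab
  rwa [← hF.apply_dyadicPoint_add_smul N a' _ k, add_right_comm, add_sub_cancel] at hωab

lemma ae_apply_self_eq_zero (hF : TwoPointMoments P F p α r s M) (hp : 0 < p) (hα : 0 < α)
    (hr : 0 ≤ r) (x : ι → ℝ) : ∀ᵐ ω ∂P, F x x ω = 0 := by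
  have hself : ‖x - x‖ ≤ r := by simpa using hr
  refine ae_eq_zero_of_lintegral_enorm_rpow_le_zero hp (hF.measurable x x hself) ?_
  simpa [Real.zero_rpow (mul_pos hp hα).ne'] using hF.segment x x hself

lemma ae_apply_eq_neg_apply [SecondCountableTopology V] (hF : TwoPointMoments P F p α r s M)
    (hp : 0 < p) (hα : 0 < α) (hr : 0 ≤ r) (hs : 0 ≤ s) {x y : ι → ℝ} (hxy : ‖y - x‖ ≤ r) :
    ∀ᵐ ω ∂P, F x y ω = -F y x ω := by
  have hyy : ‖y - y‖ = 0 := by simp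
  have hboundary := ae_eq_zero_of_lintegral_enorm_rpow_le_zero hp
    (hF.measurable_triangleBoundary (x := x) (y := y) (z := y) (by simpa using hxy)) (by
      simpa [Real.zero_rpow (mul_pos hp (half_pos hα)).ne'] using
        hF.triangle x y y hxy (hyy.trans_le hr) hxy (by simpa using hs))
  filter_upwards [hboundary, hF.ae_apply_self_eq_zero hp hα hr y] with ω hω hzero
  rw [triangleBoundary, hzero, add_zero] at hω
  exact eq_neg_of_add_eq_zero_left hω

theorem exists_ae_dyadicControl [SecondCountableTopology V] (hF : TwoPointMoments P F p α r s M)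
    (hp : 0 < p) (hM : 0 ≤ M) (hβ : 0 < β) (hγ : 4 * Fintype.card ι < p * (α - β)) (hρ : 0 ≤ ρ)
    (hr : ρ + 4 * δ[N] ≤ r) (hr₁ : r ≤ 1) (hs : δ[N] ≤ s) :
    ∃ K : Ω → ℝ, Measurable K ∧
      ∫⁻ ω, ENNReal.ofReal (K ω) ^ p ∂P ≤ ENNReal.ofReal (momentConst (Fintype.card ι) p α β
        * (M * (((2 : ℝ) ^ N) ^ (2 * Fintype.card ι) * r ^ (p * (α - β)) + 1))) ∧
      ∀ᵐ ω ∂P, DyadicControl (fun x y => F x y ω) (K ω) ρ β N := by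
  have hβα : β < α :=
    sub_pos.1 (pos_of_mul_pos_right ((by positivity : (0 : ℝ) ≤ 4 * Fintype.card ι).trans_lt hγ)
      hp.le)
  have hδ : (0 : ℝ) < δ[N] := by positivity
  have hr₀ : 0 ≤ r := by linarith
  obtain ⟨K₁, hK₁, hK₁moment, hshort⟩ := hF.exists_ae_norm_short_le hp hM hβ (by linarith)
    (N := N) (by linarith)
  obtain ⟨K₂, hK₂, hK₂moment, htriangle⟩ := hF.exists_ae_norm_triangle_le hp hM hβ hγ
    (N := N) (R := ρ + 3 * δ[N]) (by linarith) hr₁ hs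
  obtain ⟨K₃, hK₃, hK₃moment, hcoarse⟩ := hF.exists_ae_norm_coarse_le hp hM hβ hβα.le
    (N := N) (R := ρ + 3 * δ[N]) (by linarith) hr₀ hr₁
  have hantisymm : ∀ᵐ ω ∂P, ∀ n, N ≤ n → ∀ a b,
      ‖dyadicPoint n b - dyadicPoint n a‖ ≤ ρ + 4 * δ[N] →
      F (dyadicPoint n a) (dyadicPoint n b) ω = -F (dyadicPoint n b) (dyadicPoint n a) ω := by
    simp only [ae_all_iff]
    exact fun n _ a b hab => hF.ae_apply_eq_neg_apply hp (hβ.trans hβα) hr₀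
      (hδ.le.trans hs) (hab.trans hr)
  refine ⟨fun ω => max (K₁ ω) (max (K₂ ω) (K₃ ω)), hK₁.max (hK₂.max hK₃), ?_, ?_⟩
  · calc _ ≤ _ := lintegral_ofReal_max_rpow_le hp hK₁
      _ ≤ _ := add_le_add hK₁moment ((lintegral_ofReal_max_rpow_le hp hK₂).trans
          (add_le_add hK₂moment hK₃moment))
      _ ≤ _ := ofReal_add_add_le_momentConst_mul hM (by positivity) (by positivity) hγ
  · filter_upwards [hshort, htriangle, hcoarse, hantisymm] with ω h₁ h₂ h₃ h₄
    refine ⟨fun n hn a b hab => ?_, fun n hn a b c hbc hab => ?_, fun a b hab => ?_, h₄⟩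
    · have hω := h₁ n hn a (b - a) (mem_latticeBox.2 (by exact_mod_cast hab))
      rw [add_sub_cancel] at hω
      exact hω.trans (mul_le_mul_of_nonneg_right (le_max_left _ _) (by positivity))
    · exact (h₂ n hn a b c hbc hab).trans (mul_le_mul_of_nonneg_right
        (le_max_of_le_right (le_max_left _ _)) (by unfold chainWeight; positivity))
    · exact (h₃ a b hab).trans (mul_le_mul_of_nonneg_right
        (le_max_of_le_right (le_max_right _ _)) (by positivity))

lemma ae_tendsto_zero_of_moment_le (hp : 0 < p) (hα : 0 < α) {X : ℕ → Ω → V}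
    (hX : ∀ k, Measurable (X k))
    (hmoment : ∀ k, ∫⁻ ω, ‖X k ω‖ₑ ^ p ∂P ≤ ENNReal.ofReal (M * δ[N + k] ^ (p * (α / 2)))) :
    ∀ᵐ ω ∂P, Tendsto (fun k => X k ω) atTop (𝓝 0) := by
  have hratio : (1 / 2 : ℝ) ^ (p * (α / 2)) < 1 :=
    Real.rpow_lt_one (by norm_num) (by norm_num) (by positivity)
  have hgeom : ∀ k, M * δ[N + k] ^ (p * (α / 2))
      = M * δ[N] ^ (p * (α / 2)) * ((1 / 2 : ℝ) ^ (p * (α / 2))) ^ k := fun k => by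
    rw [Real.rpow_pow_comm (by norm_num), mul_assoc,
      ← Real.mul_rpow (by positivity) (by positivity), pow_add]
  simp only [hgeom] at hmoment
  refine ae_tendsto_zero_of_tsum_moment_ne_top hp hX
    (ne_top_of_le_ne_top (Summable.tsum_ofReal_ne_top ?_) (ENNReal.tsum_le_tsum hmoment))
  exact (summable_geometric_of_lt_one (by positivity) hratio).mul_left _

lemma ae_tendsto_apply_sub_zero [SecondCountableTopology V] (hF : TwoPointMoments P F p α r s M)
    (hp : 0 < p) (hα : 0 < α) (hM : 0 ≤ M) (hr : r ≤ 1) (hs : δ[N] ≤ s) {z y' : ℕ → ι → ℝ}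
    {y : ι → ℝ} (hy : ∀ k, ‖y' k - y‖ ≤ δ[N + k]) (hz : ∀ k, ‖y - z k‖ + δ[N + k] ≤ r) :
    ∀ᵐ ω ∂P, Tendsto (fun k => F (z k) (y' k) ω - F (z k) y ω) atTop (𝓝 0) := by
  have hδ : ∀ k, (0 : ℝ) < δ[N + k] := fun k => by positivity
  have hδN : ∀ k, δ[N + k] ≤ δ[N] := fun k => half_pow_le_half_pow (Nat.le_add_right N k)
  have hy_le : ∀ k, ‖y' k - y‖ ≤ r := fun k => by linarith [hy k, hz k, norm_nonneg (y - z k)]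
  have hseg : ∀ᵐ ω ∂P, Tendsto (fun k => F y (y' k) ω) atTop (𝓝 0) := by
    refine ae_tendsto_zero_of_moment_le hp hα (N := N) (M := M)
      (fun k => hF.measurable _ _ (hy_le k)) fun k =>
      (hF.segment _ _ (hy_le k)).trans (ENNReal.ofReal_le_ofReal ?_)
    gcongr
    calc ‖y' k - y‖ ^ (p * α) ≤ δ[N + k] ^ (p * α) := by gcongr; exact hy k
      _ ≤ δ[N + k] ^ (p * (α / 2)) :=
          Real.rpow_le_rpow_of_exponent_ge (hδ k) (pow_le_one₀ (by norm_num) (by norm_num))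
            (by gcongr; linarith)
  have htri : ∀ᵐ ω ∂P, Tendsto (fun k => triangleBoundary (fun x y => F x y ω) (z k) y (y' k))
      atTop (𝓝 0) := by
    refine ae_tendsto_zero_of_moment_le hp hα (N := N) (M := M)
      (fun k => hF.measurable_triangleBoundary (by linarith [hy k, hz k])) fun k => ?_
    simpa [chainWeight] using hF.lintegral_triangleBoundary_le_chainWeight hp hM le_rfl hα.le
      (hδ k) ((hδN k).trans hs) hr (hz k) (hy k)
  have hanti : ∀ᵐ ω ∂P, ∀ k, F (y' k) (z k) ω = -F (z k) (y' k) ω := ae_all_iff.2 fun k => by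
    refine hF.ae_apply_eq_neg_apply hp hα ((norm_nonneg _).trans (hy_le k)) ((hδ 0).le.trans hs) ?_
    have := norm_sub_le_norm_sub_add_norm_sub (z k) y (y' k)
    rw [norm_sub_rev (z k) y, norm_sub_rev y (y' k)] at this
    linarith [hy k, hz k]
  filter_upwards [hseg, htri, hanti] with ω hω₁ hω₂ hω₃
  refine (sub_zero (0 : V) ▸ hω₁.sub hω₂).congr fun k => ?_
  rw [triangleBoundary, hω₃]
  abel

theorem ae_dyadicLimit_eq [SecondCountableTopology V] [CompleteSpace V]
    (hF : TwoPointMoments P F p α r s M)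
    (hp : 0 < p) (hα : 0 < α) (hM : 0 ≤ M) (hβ : 0 < β) (hr : ρ + 4 * δ[N] ≤ r) (hr₁ : r ≤ 1)
    (hs : δ[N] ≤ s) {K : Ω → ℝ} (hK : ∀ᵐ ω ∂P, DyadicControl (fun x y => F x y ω) (K ω) ρ β N)
    {x y : ι → ℝ} (hxy : ‖y - x‖ ≤ ρ) :
    ∀ᵐ ω ∂P, dyadicLimit (fun x y => F x y ω) x y = F x y ω := by
  have hδ : (0 : ℝ) < δ[N] := by positivity
  have hδN : ∀ k, δ[N + k] ≤ δ[N] := fun k => half_pow_le_half_pow (Nat.le_add_right N k)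
  let x' : ℕ → ι → ℝ := fun k => dyadicPoint (N + k) (dyadicFloor (N + k) x)
  let y' : ℕ → ι → ℝ := fun k => dyadicPoint (N + k) (dyadicFloor (N + k) y)
  have hx' : ∀ k, ‖x' k - x‖ ≤ δ[N + k] := fun k => norm_dyadicPoint_dyadicFloor_sub_le _ x
  have hy' : ∀ k, ‖y' k - y‖ ≤ δ[N + k] := fun k => norm_dyadicPoint_dyadicFloor_sub_le _ y
  have hyx' : ∀ k, ‖y - x' k‖ + δ[N + k] ≤ r := fun k => by
    have := norm_sub_le_norm_sub_add_norm_sub y x (x' k)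
    rw [norm_sub_rev x] at this
    linarith [hx' k, hδN k]
  have hmove_right := hF.ae_tendsto_apply_sub_zero hp hα hM hr₁ hs hy' hyx'
  have hmove_left := hF.ae_tendsto_apply_sub_zero hp hα hM hr₁ hs (z := fun _ => y) hx'
    (fun k => by rw [norm_sub_rev]; linarith [hδN k])
  have hanti : ∀ {a b : ι → ℝ}, ‖b - a‖ ≤ r → ∀ᵐ ω ∂P, F a b ω = -F b a ω := fun hab =>
    hF.ae_apply_eq_neg_apply hp hα ((norm_nonneg _).trans hab) (hδ.le.trans hs) hab
  filter_upwards [hK, hmove_right, hmove_left, hanti (hxy.trans (by linarith)),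
    ae_all_iff.2 fun k => hanti (le_of_add_le_of_nonneg_left (hyx' k) (by positivity))]
    with ω hω hright hleft hxyω hx'yω
  have happrox := (tendsto_add_atTop_iff_nat N).2 (hω.tendsto_dyadicLimit hβ hxy)
  refine tendsto_nhds_unique happrox ?_
  have hsum := (hright.sub hleft).add_const (F x y ω)
  rw [sub_zero, zero_add] at hsum
  refine hsum.congr fun k => ?_
  rw [dyadicApprox, hx'yω, hxyω, add_comm k N]
  abel

end TwoPointMoments

end TwoPointMoments

section GridLevel

lemma exists_half_pow_le_and_two_pow_pow_le {r s : ℝ} (hr₀ : 0 < r) (hr₁ : r ≤ 1) (hs : 0 < s)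
    (k : ℕ) :
    ∃ N : ℕ, 8 * δ[N] ≤ r ∧ δ[N] ≤ s ∧ ((2 : ℝ) ^ N) ^ k ≤ 16 ^ k * (s⁻¹ ^ k + r⁻¹ ^ k) := by
  obtain ⟨n, hlt, hle⟩ := exists_nat_pow_near_of_lt_one (x := min (r / 8) s) (y := (1 / 2 : ℝ))
    (by positivity) ((min_le_left _ _).trans (by linarith)) (by norm_num) (by norm_num)
  have hlevel := lt_min_iff.1 hlt
  refine ⟨n + 1, by linarith [hlevel.1], hlevel.2.le, ?_⟩
  have hhalf : min (r / 8) s / 2 ≤ δ[n + 1] := by rw [pow_succ]; linarith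
  have hmax : (2 : ℝ) ^ (n + 1) ≤ 16 * max s⁻¹ r⁻¹ := by
    calc (2 : ℝ) ^ (n + 1) = (δ[n + 1])⁻¹ := by rw [one_div, inv_pow, inv_inv]
      _ ≤ (min (r / 8) s / 2)⁻¹ := by gcongr
      _ ≤ 16 * max s⁻¹ r⁻¹ := by
          have hr' := le_max_right s⁻¹ r⁻¹
          have hs' := le_max_left s⁻¹ r⁻¹
          have hr₀' := inv_pos.2 hr₀
          have := inv_pos.2 hs
          rcases min_choice (r / 8) s with h | h <;> rw [h, inv_div, div_eq_mul_inv]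
          · rw [inv_div, div_eq_mul_inv]; linarith
          · linarith
  calc ((2 : ℝ) ^ (n + 1)) ^ k ≤ (16 * max s⁻¹ r⁻¹) ^ k := by gcongr
    _ = 16 ^ k * max (s⁻¹ ^ k) (r⁻¹ ^ k) := by
        rw [mul_pow, (pow_left_monotoneOn (n := k)).map_max] <;> simp [hr₀.le, hs.le]
    _ ≤ 16 ^ k * (s⁻¹ ^ k + r⁻¹ ^ k) := by
        gcongr; exact max_le_add_of_nonneg (by positivity) (by positivity)

end GridLevel

section TwoPointModification

/-- The constant of `TwoPointMoments.exists_modification`, assembled from the moment bound on the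
coarsest grid of mesh comparable to `min r s` and the chaining factor. -/
def modificationConst (d : ℕ) (p α β : ℝ) : ℝ :=
  chainConst β ^ p * (momentConst d p α β * 16 ^ (2 * d))

lemma modificationConst_pos {d : ℕ} {p α β : ℝ} (hβ : 0 < β) (hγ : 4 * d < p * (α - β)) :
    0 < modificationConst d p α β := by
  have hchain := chainConst_pos hβ
  have hmoment := momentConst_pos hγ
  unfold modificationConst
  positivity

lemma lintegral_ofReal_mul_const_rpow {Ω : Type*} [MeasurableSpace Ω] (P : Measure Ω) (K : Ω → ℝ)
    {c p : ℝ} (hc : 0 ≤ c) (hp : 0 ≤ p) :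
    ∫⁻ ω, ENNReal.ofReal (K ω * c) ^ p ∂P
      = ENNReal.ofReal (c ^ p) * ∫⁻ ω, ENNReal.ofReal (K ω) ^ p ∂P := by
  simp only [ENNReal.ofReal_mul' hc, ENNReal.mul_rpow_of_nonneg _ _ hp]
  rw [lintegral_mul_const' _ _ (by finiteness), ENNReal.ofReal_rpow_of_nonneg hc hp, mul_comm]

variable {ι Ω V : Type*} [Fintype ι] [MeasurableSpace Ω] [NormedAddCommGroup V] [MeasurableSpace V]
  [BorelSpace V] [SecondCountableTopology V] [CompleteSpace V]

theorem TwoPointMoments.exists_modification {P : Measure Ω} {F : (ι → ℝ) → (ι → ℝ) → Ω → V}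
    {p α β r s M : ℝ} (hF : TwoPointMoments P F p α r s M) (hp : 0 < p) (hM : 0 ≤ M) (hβ : 0 < β)
    (hγ : 4 * Fintype.card ι < p * (α - β)) (hr₀ : 0 < r) (hr₁ : r ≤ 1) (hs : 0 < s) :
    ∃ (G : (ι → ℝ) → (ι → ℝ) → Ω → V) (K : Ω → ℝ),
      (∀ x y k, G (x + dyadicPoint 0 k) (y + dyadicPoint 0 k) = G x y) ∧
      (∀ x y, ‖y - x‖ ≤ r / 2 → ∀ᵐ ω ∂P, G x y ω = F x y ω) ∧
      (∀ᵐ ω ∂P,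
        ContinuousOn (fun q : (ι → ℝ) × (ι → ℝ) => G q.1 q.2 ω) {q | ‖q.2 - q.1‖ < r / 2} ∧
        ∀ x y, 0 < ‖y - x‖ → ‖y - x‖ ≤ r / 2 → ‖G x y ω‖ ≤ K ω * ‖y - x‖ ^ β) ∧
      ∫⁻ ω, ENNReal.ofReal (K ω) ^ p ∂P
        ≤ ENNReal.ofReal (modificationConst (Fintype.card ι) p α β * (M *
          ((s⁻¹ ^ (2 * Fintype.card ι) + r⁻¹ ^ (2 * Fintype.card ι)) * r ^ (p * (α - β))
            + 1))) := by
  have hα : 0 < α := hβ.trans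
    (sub_pos.1 (pos_of_mul_pos_right ((by positivity : (0 : ℝ) ≤ 4 * Fintype.card ι).trans_lt hγ)
      hp.le))
  obtain ⟨N, hNr, hNs, hN⟩ := exists_half_pow_le_and_two_pow_pow_le hr₀ hr₁ hs (2 * Fintype.card ι)
  have hρ : r / 2 + 4 * δ[N] ≤ r := by linarith
  obtain ⟨K, -, hKmoment, hcontrol⟩ := hF.exists_ae_dyadicControl hp hM hβ hγ (half_pos hr₀).le hρ
    hr₁ hNs
  have hchain := (chainConst_pos hβ).le
  have hmoment := (momentConst_pos hγ).le
  refine ⟨fun x y ω => dyadicLimit (fun x y => F x y ω) x y, fun ω => K ω * chainConst β,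
    fun x y k => funext fun ω => dyadicLimit_add_dyadicPoint_zero
      (fun x y k => congrFun (hF.periodic x y k) ω) x y k,
    fun x y hxy => hF.ae_dyadicLimit_eq hp hα hM hβ hρ hr₁ hNs hcontrol hxy, ?_, ?_⟩
  · filter_upwards [hcontrol] with ω hω
    exact ⟨hω.continuousOn_dyadicLimit hβ, fun x y hne hxy => hω.norm_dyadicLimit_le hβ hxy hne⟩
  · rw [lintegral_ofReal_mul_const_rpow P K hchain hp.le]
    refine (mul_le_mul_right hKmoment _).trans ?_
    rw [← ENNReal.ofReal_mul (by positivity), modificationConst, mul_assoc, mul_assoc,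
      mul_left_comm (16 ^ _) M, mul_add (16 ^ _), mul_one, ← mul_assoc (16 ^ _)]
    gcongr
    exact one_le_pow₀ (by norm_num)

end TwoPointModification

section Torus

variable {ι V : Type*}

/-- The quotient map from `ℝ^ι` onto the torus `(ℝ/ℤ)^ι`. -/
def torusProj : EuclideanSpace ℝ ι →+ UnitAddTorus ι where
  toFun v i := v i
  map_zero' := rfl
  map_add' _ _ := rfl

lemma exists_eq_add_dyadicPoint_of_torusProj_eq {x y : EuclideanSpace ℝ ι}
    (h : torusProj y = torusProj x) : ∃ k, y.ofLp = x.ofLp + dyadicPoint 0 k := by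
  have hcoord : ∀ i, ∃ n : ℤ, n • (1 : ℝ) = y i - x i := fun i => by
    rw [← AddCircle.coe_eq_zero_iff, AddCircle.coe_sub, sub_eq_zero]
    exact congrFun h i
  choose k hk using hcoord
  refine ⟨k, funext fun i => ?_⟩
  simp only [Pi.add_apply, dyadicPoint_apply, pow_zero, mul_one]
  linarith [hk i, zsmul_one (R := ℝ) (k i)]

lemma torusProj_toLp_add_dyadicPoint_zero (x : ι → ℝ) (k : ι → ℤ) :
    torusProj (WithLp.toLp 2 (x + dyadicPoint 0 k)) = torusProj (WithLp.toLp 2 x) := by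
  refine funext fun i => (sub_eq_zero.1 ?_)
  change (((x i + dyadicPoint 0 k i : ℝ) : AddCircle (1 : ℝ)) - ((x i : ℝ) : AddCircle (1 : ℝ))) = 0
  rw [← AddCircle.coe_sub, AddCircle.coe_eq_zero_iff]
  exact ⟨k i, by simp [dyadicPoint_apply]⟩

lemma isOpenQuotientMap_torusProj : IsOpenQuotientMap (torusProj (ι := ι)) :=
  (IsOpenQuotientMap.piMap fun _ => QuotientAddGroup.isOpenQuotientMap_mk).comp
    (PiLp.homeomorph 2 fun _ : ι => ℝ).isOpenQuotientMap

/-- A function `g` of two points of `ℝ^ι`, read as a function of segments of the torus: the segment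
`(x, v)` is lifted to `ℝ^ι` by an arbitrary choice of a preimage of `x`. -/
def torusDescent (g : (ι → ℝ) → (ι → ℝ) → V) (x : UnitAddTorus ι)
    (v : EuclideanSpace ℝ ι) : V :=
  g (Function.surjInv isOpenQuotientMap_torusProj.surjective x).ofLp
    ((Function.surjInv isOpenQuotientMap_torusProj.surjective x).ofLp + v.ofLp)

lemma exists_torusDescent_eq (x : UnitAddTorus ι) :
    ∃ z : EuclideanSpace ℝ ι, torusProj z = x ∧
      ∀ (g : (ι → ℝ) → (ι → ℝ) → V) v, torusDescent g x v = g z.ofLp (z.ofLp + v.ofLp) :=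
  ⟨_, Function.surjInv_eq isOpenQuotientMap_torusProj.surjective x, fun _ _ => rfl⟩

lemma torusDescent_torusProj {g : (ι → ℝ) → (ι → ℝ) → V}
    (hg : ∀ x y k, g (x + dyadicPoint 0 k) (y + dyadicPoint 0 k) = g x y)
    (z v : EuclideanSpace ℝ ι) :
    torusDescent g (torusProj z) v = g z.ofLp (z.ofLp + v.ofLp) := by
  obtain ⟨z', hz', hdescent⟩ := exists_torusDescent_eq (V := V) (torusProj z)
  obtain ⟨k, hk⟩ := exists_eq_add_dyadicPoint_of_torusProj_eq hz'
  rw [hdescent, hk, add_right_comm, hg]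

lemma continuousOn_torusDescent [Fintype ι] [TopologicalSpace V]
    {g : (ι → ℝ) → (ι → ℝ) → V} {ρ : ℝ}
    (hg : ∀ x y k, g (x + dyadicPoint 0 k) (y + dyadicPoint 0 k) = g x y)
    (hcont : ContinuousOn (fun q : (ι → ℝ) × (ι → ℝ) => g q.1 q.2) {q | ‖q.2 - q.1‖ < ρ}) :
    ContinuousOn (fun q : UnitAddTorus ι × EuclideanSpace ℝ ι => torusDescent g q.1 q.2)
      {q | ‖q.2.ofLp‖ < ρ} := by
  have hopen : IsOpen {q : UnitAddTorus ι × EuclideanSpace ℝ ι | ‖q.2.ofLp‖ < ρ} :=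
    isOpen_lt (by fun_prop) continuous_const
  refine ((isOpenQuotientMap_torusProj.prodMap
    IsOpenQuotientMap.id).isQuotientMap.continuousOn_isOpen_iff hopen).2 ?_
  have hlift : (fun q : UnitAddTorus ι × EuclideanSpace ℝ ι => torusDescent g q.1 q.2)
      ∘ Prod.map torusProj id
        = fun q : EuclideanSpace ℝ ι × EuclideanSpace ℝ ι =>
          g q.1.ofLp (q.1.ofLp + q.2.ofLp) :=
    funext fun q => torusDescent_torusProj hg q.1 q.2
  rw [hlift]
  exact hcont.comp (f := fun q : EuclideanSpace ℝ ι × EuclideanSpace ℝ ι =>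
    (q.1.ofLp, q.1.ofLp + q.2.ofLp)) (by fun_prop) fun q hq => by simpa using hq

lemma norm_ofLp_le [Fintype ι] (v : EuclideanSpace ℝ ι) : ‖v.ofLp‖ ≤ ‖v‖ := by
  simpa using (PiLp.lipschitzWith_ofLp 2 fun _ : ι => ℝ).norm_le_mul rfl v

lemma norm_toLp_le [Fintype ι] (v : ι → ℝ) : ‖WithLp.toLp 2 v‖ ≤ √(Fintype.card ι) * ‖v‖ := by
  have h := (PiLp.antilipschitzWith_ofLp 2 fun _ : ι => ℝ).le_mul_dist (WithLp.toLp 2 v) 0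
  simpa [Real.sqrt_eq_rpow] using h

lemma norm_toLp_mul_norm_toLp_le [Fintype ι] (v w : ι → ℝ) :
    ‖WithLp.toLp 2 v‖ * ‖WithLp.toLp 2 w‖ ≤ Fintype.card ι * (‖v‖ * ‖w‖) := by
  calc _ ≤ √(Fintype.card ι) * ‖v‖ * (√(Fintype.card ι) * ‖w‖) := by
        gcongr <;> exact norm_toLp_le _
    _ = _ := by rw [mul_mul_mul_comm, Real.mul_self_sqrt (Nat.cast_nonneg _)]

end Torus

section Subdivision

lemma ae_eqOn_of_ae_continuousOn {X Y Ω : Type*} [TopologicalSpace X] [SecondCountableTopology X]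
    [TopologicalSpace Y] [T2Space Y] [MeasurableSpace Ω] {P : Measure Ω} {f g : X → Ω → Y}
    {U : Set X} (hf : ∀ᵐ ω ∂P, ContinuousOn (fun x => f x ω) U)
    (hg : ∀ᵐ ω ∂P, ContinuousOn (fun x => g x ω) U)
    (hfg : ∀ x ∈ U, ∀ᵐ ω ∂P, f x ω = g x ω) :
    ∀ᵐ ω ∂P, Set.EqOn (fun x => f x ω) (fun x => g x ω) U := by
  obtain ⟨D, hDcountable, hDdense⟩ := TopologicalSpace.exists_countable_dense U
  have hD : ∀ᵐ ω ∂P, ∀ x ∈ D, f x ω = g x ω :=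
    (ae_ball_iff hDcountable).2 fun x _ => hfg x x.2
  filter_upwards [hD, hf, hg] with ω hω hfω hgω x hx
  exact congrFun (Continuous.ext_on hDdense hfω.domRestrict hgω.domRestrict hω) ⟨x, hx⟩

variable {T E Ω V : Type*} [AddCommGroup T] [NormedAddCommGroup E] [NormedSpace ℝ E]
  [NormedAddCommGroup V]

/-- The sum of `B` over the `n` pieces of equal length of the segment `(x, v)`, where vectors act on
points by translation through `π`. -/
def subdivision (π : E →+ T) (n : ℕ) (B : T → E → V) (x : T) (v : E) : V :=
  ∑ j ∈ Finset.range n, B (x + π ((j : ℝ) • (n : ℝ)⁻¹ • v)) ((n : ℝ)⁻¹ • v)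

/-- Almost sure additivity of a process indexed by the segments `(x, v)` of length at most `R`,
where vectors act on points by translation through `π`. -/
def AEAdditive [MeasurableSpace Ω] (P : Measure Ω) (π : E →+ T) (R : ℝ) (A : T → E → Ω → V) :
    Prop :=
  ∀ x v, ‖v‖ ≤ R → ∀ c ∈ Set.Icc (0 : ℝ) 1,
    ∀ᵐ ω ∂P, A x v ω = A x (c • v) ω + A (x + π (c • v)) ((1 - c) • v) ω

variable {π : E →+ T} {n : ℕ} {ρ R : ℝ}

lemma norm_inv_natCast_smul_lt {v : E} (hv : ‖v‖ < n * ρ) : ‖(n : ℝ)⁻¹ • v‖ < ρ := by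
  rcases n.eq_zero_or_pos with rfl | hn
  · exact absurd hv (by simp)
  · rw [norm_smul, norm_inv, Real.norm_natCast]
    exact (inv_mul_lt_iff₀ (by positivity)).2 hv

lemma norm_subdivision_le {B : T → E → V} {κ β : ℝ}
    (hB : ∀ x v, 0 < ‖v‖ → ‖v‖ < ρ → ‖B x v‖ ≤ κ * ‖v‖ ^ β) (x : T) {v : E} (hv₀ : 0 < ‖v‖)
    (hv : ‖v‖ < n * ρ) : ‖subdivision π n B x v‖ ≤ κ * (n : ℝ) ^ (1 - β) * ‖v‖ ^ β := by
  have hn : 0 < n := by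
    by_contra h
    exact absurd hv (by simp [Nat.eq_zero_of_not_pos h])
  have hpiece : ‖(n : ℝ)⁻¹ • v‖ = (n : ℝ)⁻¹ * ‖v‖ := by
    rw [norm_smul, norm_inv, Real.norm_natCast]
  refine (norm_sum_le_of_le _ fun j _ => hB _ _ (by rw [hpiece]; positivity)
    (norm_inv_natCast_smul_lt hv)).trans_eq ?_
  rw [Finset.sum_const, Finset.card_range, nsmul_eq_mul, hpiece, Real.mul_rpow (by positivity)
    hv₀.le, Real.inv_rpow (by positivity), Real.rpow_sub (by positivity), Real.rpow_one]
  ring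

lemma continuousOn_subdivision [TopologicalSpace T] [ContinuousAdd T] {B : T → E → V}
    (hπ : Continuous π) (hB : ContinuousOn (fun q : T × E => B q.1 q.2) {q | ‖q.2‖ < ρ}) :
    ContinuousOn (fun q : T × E => subdivision π n B q.1 q.2) {q | ‖q.2‖ < n * ρ} := by
  refine continuousOn_finsetSum _ fun j _ => ?_
  exact hB.comp (f := fun q : T × E => (q.1 + π ((j : ℝ) • (n : ℝ)⁻¹ • q.2), (n : ℝ)⁻¹ • q.2))
    (by fun_prop) fun q hq => norm_inv_natCast_smul_lt hq

namespace AEAdditive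

variable [MeasurableSpace Ω] {P : Measure Ω} {A : T → E → Ω → V}

lemma ae_apply_zero (hA : AEAdditive P π R A) (hR : 0 ≤ R) (x : T) : ∀ᵐ ω ∂P, A x 0 ω = 0 := by
  filter_upwards [hA x 0 (by simpa using hR) 0 (by simp)] with ω hω
  simpa using hω

lemma ae_apply_natCast_smul (hA : AEAdditive P π R A) (hR : 0 ≤ R) (x : T) {u : E} (n : ℕ)
    (hu : n * ‖u‖ ≤ R) :
    ∀ᵐ ω ∂P, A x ((n : ℝ) • u) ω = ∑ j ∈ Finset.range n, A (x + π ((j : ℝ) • u)) u ω := by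
  induction n with
  | zero => simpa using hA.ae_apply_zero hR x
  | succ n ih =>
    push_cast at hu ⊢
    have hn : (0 : ℝ) < n + 1 := by positivity
    have hfirst : (n / (n + 1) : ℝ) • ((n + 1 : ℝ) • u) = (n : ℝ) • u := by
      rw [smul_smul, div_mul_cancel₀ _ hn.ne']
    have hlast : (1 - n / (n + 1) : ℝ) • ((n + 1 : ℝ) • u) = u := by
      rw [smul_smul, sub_mul, div_mul_cancel₀ _ hn.ne', one_mul, add_sub_cancel_left, one_smul]
    filter_upwards [ih (by nlinarith [norm_nonneg u]), hA x ((n + 1 : ℝ) • u)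
      (by rwa [norm_smul, Real.norm_of_nonneg hn.le]) (n / (n + 1))
      ⟨by positivity, (div_le_one hn).2 (by linarith)⟩] with ω hsum hsplit
    rw [hsplit, Finset.sum_range_succ, ← hsum, hfirst, hlast]

lemma ae_subdivision_eq (hA : AEAdditive P π R A) {B : T → E → Ω → V}
    (hBA : ∀ x v, ‖v‖ < ρ → ∀ᵐ ω ∂P, B x v ω = A x v ω) (x : T) {v : E} (hvR : ‖v‖ ≤ R)
    (hv : ‖v‖ < n * ρ) :
    ∀ᵐ ω ∂P, subdivision π n (fun x v => B x v ω) x v = A x v ω := by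
  have hn : (n : ℝ) ≠ 0 := by rintro h; exact absurd hv (by simp [h])
  have hlen : n * ‖(n : ℝ)⁻¹ • v‖ ≤ R := by
    rwa [norm_smul, norm_inv, Real.norm_natCast, mul_inv_cancel_left₀ hn]
  filter_upwards [hA.ae_apply_natCast_smul ((norm_nonneg v).trans hvR) x n hlen,
    ae_all_iff.2 fun j : ℕ => hBA (x + π ((j : ℝ) • (n : ℝ)⁻¹ • v)) _
      (norm_inv_natCast_smul_lt hv)] with ω hsum hpieces
  rw [smul_inv_smul₀ hn] at hsum
  rw [hsum]
  exact Finset.sum_congr rfl fun j _ => hpieces j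

theorem exists_modification_of_short [TopologicalSpace T] [ContinuousAdd T]
    [SecondCountableTopology T] [SecondCountableTopology E] (hA : AEAdditive P π R A)
    (hπ : Continuous π) (hρ : 0 < ρ) {B : T → E → Ω → V}
    (hBA : ∀ x v, ‖v‖ < ρ → ∀ᵐ ω ∂P, B x v ω = A x v ω)
    (hB : ∀ᵐ ω ∂P, ContinuousOn (fun q : T × E => B q.1 q.2 ω) {q | ‖q.2‖ < ρ}) :
    ∃ A' : T → E → Ω → V,
      (∀ x v, ‖v‖ ≤ R → ∀ᵐ ω ∂P, A' x v ω = A x v ω) ∧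
      (∀ᵐ ω ∂P, ContinuousOn (fun q : T × E => A' q.1 q.2 ω) {q | ‖q.2‖ ≤ R}) ∧
      ∀ n : ℕ, ∀ᵐ ω ∂P, ∀ x v, ‖v‖ ≤ R → ‖v‖ < n * ρ →
        A' x v ω = subdivision π n (fun x v => B x v ω) x v := by
  obtain ⟨m, hm⟩ := exists_nat_gt (R / ρ)
  rw [div_lt_iff₀ hρ] at hm
  have hcont : ∀ n : ℕ, ∀ᵐ ω ∂P, ContinuousOn
      (fun q : T × E => subdivision π n (fun x v => B x v ω) q.1 q.2) {q | ‖q.2‖ < n * ρ} :=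
    fun n => hB.mono fun ω hω => continuousOn_subdivision hπ hω
  refine ⟨fun x v ω => subdivision π m (fun x v => B x v ω) x v,
    fun x v hv => hA.ae_subdivision_eq hBA x hv (hv.trans_lt hm),
    (hcont m).mono fun ω hω => hω.mono fun q hq => lt_of_le_of_lt hq hm, fun n => ?_⟩
  have hagree := ae_eqOn_of_ae_continuousOn (U := {q : T × E | ‖q.2‖ ≤ R ∧ ‖q.2‖ < n * ρ})
    ((hcont m).mono fun ω hω => hω.mono fun q hq => lt_of_le_of_lt hq.1 hm)
    ((hcont n).mono fun ω hω => hω.mono fun q hq => hq.2) fun q hq => by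
      filter_upwards [hA.ae_subdivision_eq hBA q.1 hq.1 (hq.1.trans_lt hm),
        hA.ae_subdivision_eq hBA q.1 hq.1 hq.2] with ω hmω hnω
      rw [hmω, hnω]
  filter_upwards [hagree] with ω hω x v hvR hv
  exact hω (x := (x, v)) ⟨hvR, hv⟩

end AEAdditive

end Subdivision

section SegmentMoments

variable {ι Ω V : Type*} [Fintype ι] [MeasurableSpace Ω] [NormedAddCommGroup V] [MeasurableSpace V]

/-- The assumptions of the continuity criterion on a process indexed by the segments `(x, v)` of the
torus with `‖v‖ ≤ 1/4`. The area of the triangle `(x, v, w)` is replaced by the product of the sides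
`‖v‖` and `‖w - v‖`, which makes sense in every dimension. -/
structure SegmentMoments (P : Measure Ω) (A : UnitAddTorus ι → EuclideanSpace ℝ ι → Ω → V)
    (p α r s M : ℝ) : Prop where
  measurable : ∀ x v, ‖v‖ ≤ 1 / 4 → Measurable (A x v)
  additive : AEAdditive P torusProj (1 / 4) A
  segment : ∀ x v, 0 < ‖v‖ → ‖v‖ < r → ‖v‖ ≤ 1 / 4 →
    ∫⁻ ω, ‖A x v ω‖ₑ ^ p ∂P ≤ ENNReal.ofReal (M * ‖v‖ ^ (p * α))
  triangle : ∀ x v w, ‖v‖ ≤ 1 / 4 → ‖w‖ ≤ 1 / 4 → ‖v - w‖ ≤ 1 / 4 → ‖v‖ * ‖w - v‖ < s →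
    ∫⁻ ω, ‖A x v ω + A (x + torusProj v) (w - v) ω + A (x + torusProj w) (-w) ω‖ₑ ^ p ∂P
      ≤ ENNReal.ofReal (M * (‖v‖ * ‖w - v‖) ^ (p * (α / 2)))

lemma rescaled_moment_bound_le {d : ℕ} (hd : 0 < d) {M r s γ c : ℝ} (hM : 0 ≤ M) (hr : 0 ≤ r)
    (hs : 0 ≤ s) (hγ : 0 ≤ γ) (hc : 0 ≤ c) :
    M * c * (((s / (2 * d))⁻¹ ^ (2 * d) + (r / (8 * √d))⁻¹ ^ (2 * d)) * (r / (8 * √d)) ^ γ + 1)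
      ≤ c * (8 * d) ^ (2 * d) * (M * ((s⁻¹ ^ (2 * d) + r⁻¹ ^ (2 * d)) * r ^ γ + 1)) := by
  have hd₁ : (1 : ℝ) ≤ d := by exact_mod_cast hd
  have hsqrt₁ : 1 ≤ √(d : ℝ) := Real.one_le_sqrt.2 hd₁
  have hsqrt : √(d : ℝ) ≤ d := Real.sqrt_le_self_iff.2 (Or.inr hd₁)
  have hs_inv : (s / (2 * d))⁻¹ ≤ 8 * d * s⁻¹ := by
    rw [inv_div, div_eq_mul_inv]; gcongr; norm_num
  have hr_inv : (r / (8 * √d))⁻¹ ≤ 8 * d * r⁻¹ := by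
    rw [inv_div, div_eq_mul_inv]; gcongr
  calc _ ≤ M * c * (((8 * d * s⁻¹) ^ (2 * d) + (8 * d * r⁻¹) ^ (2 * d)) * r ^ γ
            + (8 * d) ^ (2 * d)) := by
        gcongr
        · exact div_le_self hr (by linarith)
        · exact one_le_pow₀ (by linarith)
    _ = _ := by rw [mul_pow, mul_pow]; ring

lemma rpow_mul_eq_mul_self_rpow_half {t : ℝ} (ht : 0 ≤ t) (p α : ℝ) :
    t ^ (p * α) = (t * t) ^ (p * (α / 2)) := by
  rw [← pow_two, ← Real.rpow_natCast_mul ht]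
  congr 1
  push_cast
  ring

lemma mul_rpow_le_mul_rpow_mul_rpow {c M q t u : ℝ} (hM : 0 ≤ M) (hq : 0 ≤ q) (hc : 0 ≤ c)
    (ht : 0 ≤ t) (hu : 0 ≤ u) (htu : t ≤ c * u) : M * t ^ q ≤ M * c ^ q * u ^ q := by
  rw [mul_assoc, ← Real.mul_rpow hc hu]
  gcongr

/-- The constant of `SegmentMoments.exists_modification`: the factor `(17 * d) ^ (1 - β)` is the
cost of reaching the segments of length up to `r` from those shorter than `r / (16 * √d)`. -/
def segmentConst (d : ℕ) (p α β : ℝ) : ℝ :=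
  ((17 * d : ℝ) ^ (1 - β)) ^ p
    * (modificationConst d p α β * (d ^ (p * (α / 2)) * (8 * d) ^ (2 * d)))

lemma segmentConst_pos {d : ℕ} {p α β : ℝ} (hd : 0 < d) (hβ : 0 < β) (hγ : 4 * d < p * (α - β)) :
    0 < segmentConst d p α β := by
  have hmodification := modificationConst_pos hβ hγ
  unfold segmentConst
  positivity

namespace SegmentMoments

variable {P : Measure Ω} {A : UnitAddTorus ι → EuclideanSpace ℝ ι → Ω → V} {p α β r s M : ℝ}

lemma lintegral_enorm_rpow_le (hA : SegmentMoments P A p α r s M) (hp : 0 < p) (x : UnitAddTorus ι)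
    {v : EuclideanSpace ℝ ι} (hv : ‖v‖ < r) (hv' : ‖v‖ ≤ 1 / 4) :
    ∫⁻ ω, ‖A x v ω‖ₑ ^ p ∂P ≤ ENNReal.ofReal (M * ‖v‖ ^ (p * α)) := by
  rcases (norm_nonneg v).eq_or_lt with hv₀ | hv₀
  · have hzero : (fun ω => ‖A x v ω‖ₑ ^ p) =ᵐ[P] 0 := by
      filter_upwards [hA.additive.ae_apply_zero (by norm_num) x] with ω hω
      simp [norm_eq_zero.1 hv₀.symm, hω, hp]
    simp [lintegral_congr_ae hzero]
  · exact hA.segment x v hv₀ hv hv'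

lemma twoPointMoments [Nonempty ι] (hA : SegmentMoments P A p α r s M) (hp : 0 < p) (hα : 0 ≤ α)
    (hr₀ : 0 < r) (hr₁ : r ≤ 1) (hs : 0 < s) (hM : 0 ≤ M) :
    TwoPointMoments P (fun x y => A (torusProj (.toLp 2 x)) (.toLp 2 (y - x))) p α
      (r / (8 * √(Fintype.card ι))) (s / (2 * Fintype.card ι))
      (M * Fintype.card ι ^ (p * (α / 2))) := by
  have hd : (0 : ℝ) < Fintype.card ι := by exact_mod_cast Fintype.card_pos
  have : 0 < √(Fintype.card ι : ℝ) := Real.sqrt_pos.2 hd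
  have hlen : ∀ {v : ι → ℝ}, ‖v‖ ≤ r / (8 * √(Fintype.card ι)) → ‖WithLp.toLp 2 v‖ ≤ r / 8 := by
    intro v hv
    refine (norm_toLp_le v).trans ?_
    rw [le_div_iff₀ (by positivity)] at hv
    linarith
  have hadd : ∀ x y : ι → ℝ, torusProj (.toLp 2 x) + torusProj (.toLp 2 (y - x))
      = torusProj (.toLp 2 y) := fun x y => by
    rw [← map_add, ← WithLp.toLp_add, add_sub_cancel]
  refine ⟨fun x y hxy => hA.measurable _ _ (by linarith [hlen hxy]), fun x y hxy => ?_,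
    fun x y z hxy hyz hxz hprod => ?_, fun x y k => ?_⟩
  · refine (hA.lintegral_enorm_rpow_le hp _ ((hlen hxy).trans_lt (by linarith))
      (by linarith [hlen hxy])).trans (ENNReal.ofReal_le_ofReal ?_)
    rw [rpow_mul_eq_mul_self_rpow_half (norm_nonneg _),
      rpow_mul_eq_mul_self_rpow_half (norm_nonneg (y - x))]
    exact mul_rpow_le_mul_rpow_mul_rpow hM (by positivity) hd.le (by positivity) (by positivity)
      (norm_toLp_mul_norm_toLp_le _ _)
  · have hthird : WithLp.toLp 2 (z - x) - WithLp.toLp 2 (y - x) = WithLp.toLp 2 (z - y) := by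
      rw [← WithLp.toLp_sub, sub_sub_sub_cancel_right]
    have hprod' := norm_toLp_mul_norm_toLp_le (y - x) (z - y)
    rw [le_div_iff₀ (by positivity)] at hprod
    have htriangle := hA.triangle (torusProj (.toLp 2 x)) (.toLp 2 (y - x)) (.toLp 2 (z - x))
      (by linarith [hlen hxy]) (by linarith [hlen hxz])
      (by rw [norm_sub_rev, hthird]; linarith [hlen hyz]) (by rw [hthird]; linarith)
    rw [hthird, hadd, hadd, ← WithLp.toLp_neg, neg_sub] at htriangle
    exact htriangle.trans (ENNReal.ofReal_le_ofReal
      (mul_rpow_le_mul_rpow_mul_rpow hM (by positivity) hd.le (by positivity) (by positivity)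
        hprod'))
  · rw [torusProj_toLp_add_dyadicPoint_zero, add_sub_add_right_eq_sub]

variable [BorelSpace V] [SecondCountableTopology V] [CompleteSpace V]

theorem exists_short_modification [Nonempty ι] (hA : SegmentMoments P A p α r s M) (hp : 0 < p)
    (hβ : 0 < β) (hγ : 4 * Fintype.card ι < p * (α - β)) (hr₀ : 0 < r) (hr₁ : r ≤ 1) (hs : 0 < s)
    (hM : 0 ≤ M) :
    ∃ (B : UnitAddTorus ι → EuclideanSpace ℝ ι → Ω → V) (K : Ω → ℝ),
      (∀ x v, ‖v‖ < r / (16 * √(Fintype.card ι)) → ∀ᵐ ω ∂P, B x v ω = A x v ω) ∧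
      (∀ᵐ ω ∂P, ContinuousOn (fun q : UnitAddTorus ι × EuclideanSpace ℝ ι => B q.1 q.2 ω)
          {q | ‖q.2‖ < r / (16 * √(Fintype.card ι))} ∧
        ∀ x v, 0 < ‖v‖ → ‖v‖ < r / (16 * √(Fintype.card ι)) → ‖B x v ω‖ ≤ K ω * ‖v‖ ^ β) ∧
      ∫⁻ ω, ENNReal.ofReal (K ω) ^ p ∂P
        ≤ ENNReal.ofReal (modificationConst (Fintype.card ι) p α β *
          (Fintype.card ι ^ (p * (α / 2)) * (8 * Fintype.card ι) ^ (2 * Fintype.card ι) * (M *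
          ((s⁻¹ ^ (2 * Fintype.card ι) + r⁻¹ ^ (2 * Fintype.card ι)) * r ^ (p * (α - β))
            + 1)))) := by
  have : (0 : ℝ) < Fintype.card ι := by exact_mod_cast Fintype.card_pos
  have hβα : 0 < α - β := pos_of_mul_pos_right
    ((by positivity : (0 : ℝ) ≤ 4 * Fintype.card ι).trans_lt hγ) hp.le
  have hsqrt : 1 ≤ √(Fintype.card ι : ℝ) :=
    Real.one_le_sqrt.2 (by exact_mod_cast Fintype.card_pos)
  obtain ⟨G, K, hperiodic, hGA, hG, hK⟩ :=
    (hA.twoPointMoments hp (by linarith) hr₀ hr₁ hs hM).exists_modification hp (by positivity) hβ hγ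
      (by positivity) ((div_le_self hr₀.le (by linarith)).trans hr₁) (by positivity)
  have hradius : r / (8 * √(Fintype.card ι)) / 2 = r / (16 * √(Fintype.card ι)) := by
    rw [div_div]; ring_nf
  rw [hradius] at hGA hG
  have hperiodic' : ∀ ω x y k, G (x + dyadicPoint 0 k) (y + dyadicPoint 0 k) ω = G x y ω :=
    fun ω x y k => congrFun (hperiodic x y k) ω
  refine ⟨fun x v ω => torusDescent (fun x y => G x y ω) x v, K, fun x v hv => ?_, ?_, ?_⟩
  · obtain ⟨z, rfl, hz⟩ := exists_torusDescent_eq (V := V) x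
    filter_upwards [hGA z.ofLp (z.ofLp + v.ofLp)
      (by simpa using (norm_ofLp_le v).trans hv.le)] with ω hω
    rw [hz, hω]
    simp
  · filter_upwards [hG] with ω ⟨hcont, hbound⟩
    refine ⟨(continuousOn_torusDescent (hperiodic' ω) hcont).mono
      fun q hq => (norm_ofLp_le q.2).trans_lt hq, fun x v hv₀ hv => ?_⟩
    obtain ⟨z, -, hz⟩ := exists_torusDescent_eq (V := V) x
    have hv' : 0 < ‖v.ofLp‖ := norm_pos_iff.2 fun h => by simp [(WithLp.ofLp_eq_zero 2).1 h] at hv₀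
    have hzv := hbound z.ofLp (z.ofLp + v.ofLp)
    rw [add_sub_cancel_left] at hzv
    have hsup := hzv hv' ((norm_ofLp_le v).trans hv.le)
    have hK₀ : 0 ≤ K ω := nonneg_of_mul_nonneg_left ((norm_nonneg _).trans hsup) (by positivity)
    rw [hz]
    refine hsup.trans ?_
    gcongr
    exact norm_ofLp_le v
  · refine hK.trans (ENNReal.ofReal_le_ofReal ?_)
    exact mul_le_mul_of_nonneg_left (rescaled_moment_bound_le (Fintype.card_pos (α := ι)) hM hr₀.le
      hs.le (by positivity) (by positivity)) (modificationConst_pos hβ hγ).le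

theorem exists_modification [Nonempty ι] (hA : SegmentMoments P A p α r s M) (hp : 0 < p)
    (hβ : 0 < β) (hγ : 4 * Fintype.card ι < p * (α - β)) (hr₀ : 0 < r) (hr₁ : r ≤ 1) (hs : 0 < s)
    (hM : 0 ≤ M) :
    ∃ (A' : UnitAddTorus ι → EuclideanSpace ℝ ι → Ω → V) (K : Ω → ℝ),
      (∀ x v, ‖v‖ ≤ 1 / 4 → ∀ᵐ ω ∂P, A' x v ω = A x v ω) ∧
      (∀ᵐ ω ∂P, ContinuousOn (fun q : UnitAddTorus ι × EuclideanSpace ℝ ι => A' q.1 q.2 ω)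
        {q | ‖q.2‖ ≤ 1 / 4}) ∧
      (∀ᵐ ω ∂P, ∀ x v, 0 < ‖v‖ → ‖v‖ < r → ‖v‖ ≤ 1 / 4 → ‖A' x v ω‖ ≤ K ω * ‖v‖ ^ β) ∧
      ∫⁻ ω, ENNReal.ofReal (K ω) ^ p ∂P
        ≤ ENNReal.ofReal (segmentConst (Fintype.card ι) p α β * M *
          ((s⁻¹ ^ (2 * Fintype.card ι) + r⁻¹ ^ (2 * Fintype.card ι)) * r ^ (p * (α - β)) + 1)) := by
  have hd : (1 : ℝ) ≤ Fintype.card ι := by exact_mod_cast Fintype.card_pos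
  have : 0 < √(Fintype.card ι : ℝ) := by positivity
  have hsqrt : √(Fintype.card ι : ℝ) ≤ Fintype.card ι := Real.sqrt_le_self_iff.2 (Or.inr hd)
  obtain ⟨B, K, hBA, hB, hK⟩ := hA.exists_short_modification hp hβ hγ hr₀ hr₁ hs hM
  obtain ⟨A', hA'A, hA', hsubdivision⟩ := hA.additive.exists_modification_of_short
    isOpenQuotientMap_torusProj.continuous (by positivity) hBA (hB.mono fun _ hω => hω.1)
  refine ⟨A', fun ω => K ω * (17 * Fintype.card ι : ℝ) ^ (1 - β), hA'A, hA', ?_, ?_⟩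
  · have hcover : r ≤ (17 * Fintype.card ι : ℕ) * (r / (16 * √(Fintype.card ι))) := by
      push_cast
      rw [mul_div_assoc', le_div_iff₀ (by positivity)]
      nlinarith
    filter_upwards [hB, hsubdivision (17 * Fintype.card ι)] with ω ⟨_, hbound⟩ hω x v hv₀ hvr hv
    rw [hω x v hv (hvr.trans_le hcover)]
    simpa using norm_subdivision_le hbound x hv₀ (hvr.trans_le hcover)
  · rw [lintegral_ofReal_mul_const_rpow P K (by positivity) hp.le]
    refine (mul_le_mul_right hK _).trans_eq ?_
    rw [← ENNReal.ofReal_mul (by positivity), segmentConst]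
    ring_nf

end SegmentMoments

end SegmentMoments

lemma triArea_nonneg (v w : E3) : 0 ≤ triArea v w := by
  unfold triArea
  positivity

lemma triArea_le_norm_mul_norm_sub (v w : E3) : triArea v w ≤ ‖v‖ * ‖w - v‖ := by
  have hcross : ‖cross v w‖ ≤ ‖v‖ * ‖w - v‖ := by
    refine (sq_le_sq₀ (norm_nonneg _) (by positivity)).1 ?_
    rw [mul_pow, EuclideanSpace.norm_sq_eq, EuclideanSpace.norm_sq_eq, EuclideanSpace.norm_sq_eq]
    simp only [Fin.sum_univ_three, Real.norm_eq_abs, sq_abs, PiLp.sub_apply]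
    change (v 1 * w 2 - v 2 * w 1) ^ 2 + (v 2 * w 0 - v 0 * w 2) ^ 2
      + (v 0 * w 1 - v 1 * w 0) ^ 2 ≤ _
    -- Lagrange's identity: the defect is the square of the inner product of `v` and `w - v`.
    nlinarith [sq_nonneg (v 0 * (w 0 - v 0) + v 1 * (w 1 - v 1) + v 2 * (w 2 - v 2))]
  exact (half_le_self (norm_nonneg _)).trans hcross

lemma segmentMoments_of_triArea {Ω V : Type*} [MeasurableSpace Ω] {P : Measure Ω}
    [NormedAddCommGroup V] [MeasurableSpace V] {A : T3 → E3 → Ω → V} {p α r s M : ℝ} (hp : 0 < p)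
    (hα : 0 ≤ α) (hM : 0 ≤ M) (hmeas : ∀ x v, ‖v‖ ≤ 1 / 4 → Measurable (A x v))
    (hadd : AEAdditive P torusProj (1 / 4) A)
    (hsegment : ∀ x v, 0 < ‖v‖ → ‖v‖ < r → ‖v‖ ≤ 1 / 4 →
      ∫⁻ ω, ENNReal.ofReal ‖A x v ω‖ ^ p ∂P ≤ ENNReal.ofReal (M * ‖v‖ ^ (p * α)))
    (htriangle : ∀ x v w, ‖v‖ ≤ 1 / 4 → ‖w‖ ≤ 1 / 4 → ‖v - w‖ ≤ 1 / 4 → triArea v w < s →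
      ∫⁻ ω, ENNReal.ofReal ‖A x v ω + A (x + tq v) (w - v) ω + A (x + tq w) (-w) ω‖ ^ p ∂P
        ≤ ENNReal.ofReal (M * triArea v w ^ (p * α / 2))) :
    SegmentMoments P A p α r s M where
  measurable := hmeas
  additive := hadd
  segment := by simpa only [ofReal_norm] using hsegment
  triangle x v w hv hw hvw hs := by
    have harea := triArea_le_norm_mul_norm_sub v w
    have hbound := htriangle x v w hv hw hvw (harea.trans_lt hs)
    simp only [ofReal_norm, mul_div_assoc] at hbound
    refine hbound.trans (ENNReal.ofReal_le_ofReal ?_)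
    have := triArea_nonneg v w
    gcongr

lemma inv_pow_six_add_inv_pow_six_le {r s : ℝ} (hr₀ : 0 < r) (hr₁ : r ≤ 1) (hs : 0 < s) :
    s⁻¹ ^ 6 + r⁻¹ ^ 6 ≤ s ^ (-(6 : ℝ)) + r ^ (-(12 : ℝ)) := by
  have hs_pow : s ^ (-(6 : ℝ)) = s⁻¹ ^ 6 := by
    rw [Real.rpow_neg hs.le, ← Real.inv_rpow hs.le]; norm_cast
  have hr_pow : r ^ (-(12 : ℝ)) = r⁻¹ ^ 12 := by
    rw [Real.rpow_neg hr₀.le, ← Real.inv_rpow hr₀.le]; norm_cast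
  rw [hs_pow, hr_pow]
  gcongr
  · exact (one_le_inv₀ hr₀).2 hr₁
  · norm_num

end KolmogorovCriterion

theorem stmt_1_general {ι : Type*} [Fintype ι] [Nonempty ι] (p α β : ℝ) (hp : 0 < p)
    (hβ : β ∈ Set.Ioo 0 (α - 4 * Fintype.card ι / p)) :
    ∃ lam : ℝ, 0 < lam ∧
      ∀ (Ω : Type uo) [MeasurableSpace Ω] (P : Measure Ω)
        (V : Type uv) [NormedAddCommGroup V] [CompleteSpace V] [SecondCountableTopology V]
        [MeasurableSpace V] [BorelSpace V]
        (A : UnitAddTorus ι → EuclideanSpace ℝ ι → Ω → V) (r s M : ℝ),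
        r ∈ Set.Ioc 0 1 → 0 < s → 0 ≤ M → SegmentMoments P A p α r s M →
        ∃ Atil : UnitAddTorus ι → EuclideanSpace ℝ ι → Ω → V,
          (∀ x v, ‖v‖ ≤ 1 / 4 → ∀ᵐ ω ∂P, Atil x v ω = A x v ω) ∧
          (∀ᵐ ω ∂P, ContinuousOn (fun q : UnitAddTorus ι × EuclideanSpace ℝ ι => Atil q.1 q.2 ω)
            {q | ‖q.2‖ ≤ 1 / 4}) ∧
          ∫⁻ ω, (⨆ (x) (v) (_ : 0 < ‖v‖) (_ : ‖v‖ < r) (_ : ‖v‖ ≤ 1 / 4),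
              ENNReal.ofReal (‖Atil x v ω‖ / ‖v‖ ^ β) ^ p) ∂P
            ≤ ENNReal.ofReal (lam * M *
                ((s⁻¹ ^ (2 * Fintype.card ι) + r⁻¹ ^ (2 * Fintype.card ι)) * r ^ (p * (α - β))
                  + 1)) := by
  have hγ : 4 * Fintype.card ι < p * (α - β) := by
    rw [mul_comm p, ← div_lt_iff₀ hp]
    linarith [hβ.2]
  refine ⟨segmentConst (Fintype.card ι) p α β, segmentConst_pos Fintype.card_pos hβ.1 hγ, ?_⟩
  intro Ω _ P V _ _ _ _ _ A r s M hr hs hM hA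
  obtain ⟨Atil, K, hmodification, hcont, hbound, hK⟩ :=
    hA.exists_modification hp hβ.1 hγ hr.1 hr.2 hs hM
  refine ⟨Atil, hmodification, hcont, (lintegral_mono_ae ?_).trans hK⟩
  filter_upwards [hbound] with ω hω
  simp only [iSup_le_iff]
  intro x v hv₀ hvr hv
  gcongr
  exact (div_le_iff₀ (by positivity)).2 (hω x v hv₀ hvr hv)

/-- Kolmogorov-type continuity criterion for additive, `V`-valued stochastic processes
indexed by the segments `𝒳 = {(x,v) : x ∈ 𝕋³, v ∈ ℝ³, ‖v‖ ≤ 1/4}`: the constant `lam`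
depends only on `p`, `α`, `ᾱ`. -/
theorem stmt_1 (p α ᾱ : ℝ) (hp : 0 < p) (hα : α ∈ Set.Ioc (0:ℝ) 1)
    (hᾱ : ᾱ ∈ Set.Ioo (0:ℝ) (α - 24 / p)) :
    ∃ lam : ℝ, 0 < lam ∧
      ∀ (Ω : Type uo) [MeasurableSpace Ω] (P : Measure Ω) [IsProbabilityMeasure P]
        (V : Type uv) [NormedAddCommGroup V] [NormedSpace ℝ V] [FiniteDimensional ℝ V]
        [MeasurableSpace V] [BorelSpace V]
        (A : T3 → E3 → Ω → V) (r s M : ℝ),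
        r ∈ Set.Ioo (0:ℝ) 1 → s ∈ Set.Ioo (0:ℝ) 1 → 0 < M →
        -- each `A(ℓ)` is measurable
        (∀ (x : T3) (v : E3), ‖v‖ ≤ 1/4 → Measurable (A x v)) →
        -- almost-sure additivity
        (∀ (x : T3) (v : E3), ‖v‖ ≤ 1/4 → ∀ c ∈ Set.Icc (0:ℝ) 1,
          ∀ᵐ ω ∂P, A x v ω = A x (c • v) ω + A (x + tq (c • v)) ((1 - c) • v) ω) →
        -- moment bound on short segments
        (∀ (x : T3) (v : E3), 0 < ‖v‖ → ‖v‖ < r → ‖v‖ ≤ 1/4 →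
          ∫⁻ ω, ENNReal.ofReal ‖A x v ω‖ ^ p ∂P ≤ ENNReal.ofReal (M * ‖v‖ ^ (p * α))) →
        -- moment bound on small triangle boundaries
        (∀ (x : T3) (v w : E3), ‖v‖ ≤ 1/4 → ‖w‖ ≤ 1/4 → ‖v - w‖ ≤ 1/4 →
          triArea v w < s →
          ∫⁻ ω, ENNReal.ofReal
              ‖A x v ω + A (x + tq v) (w - v) ω + A (x + tq w) (-w) ω‖ ^ p ∂P
            ≤ ENNReal.ofReal (M * triArea v w ^ (p * α / 2))) →
        ∃ Atil : T3 → E3 → Ω → V,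
          -- `Atil` is a modification of `A`
          (∀ (x : T3) (v : E3), ‖v‖ ≤ 1/4 → ∀ᵐ ω ∂P, Atil x v ω = A x v ω) ∧
          -- `Atil` is almost surely continuous on `𝒳`
          (∀ᵐ ω ∂P, ContinuousOn (fun q : T3 × E3 => Atil q.1 q.2 ω)
            {q : T3 × E3 | ‖q.2‖ ≤ 1/4}) ∧
          -- moment bound on the Hölder-type supremum
          ∫⁻ ω, (⨆ (x : T3) (v : E3) (_ : 0 < ‖v‖) (_ : ‖v‖ < r) (_ : ‖v‖ ≤ 1/4),
              ENNReal.ofReal (‖Atil x v ω‖ / ‖v‖ ^ ᾱ) ^ p) ∂P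
            ≤ ENNReal.ofReal
                (lam * M * ((s ^ (-(6:ℝ)) + r ^ (-(12:ℝ))) * r ^ (p * (α - ᾱ)) + 1)) := by
  have h₁₂ : 4 * Fintype.card (Fin 3) / p ≤ 24 / p := by
    rw [Fintype.card_fin]
    gcongr
    norm_num
  obtain ⟨lam, hlam, hgeneral⟩ := stmt_1_general (ι := Fin 3) p α ᾱ hp
    ⟨hᾱ.1, hᾱ.2.trans_le (sub_le_sub_left h₁₂ α)⟩
  refine ⟨lam, hlam, ?_⟩
  intro Ω _ P _ V _ _ _ _ _ A r s M hr hs hM hmeas hadd hsegment htriangle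
  have : CompleteSpace V := FiniteDimensional.complete ℝ V
  have : ProperSpace V := FiniteDimensional.proper_real V
  obtain ⟨Atil, hmodification, hcont, hmoment⟩ := hgeneral Ω P V A r s M ⟨hr.1, hr.2.le⟩ hs.1 hM.le
    (segmentMoments_of_triArea hp hα.1.le hM.le hmeas hadd hsegment htriangle)
  refine ⟨Atil, hmodification, hcont, hmoment.trans (ENNReal.ofReal_le_ofReal ?_)⟩
  have hr_pow := Real.rpow_nonneg hr.1.le (p * (α - ᾱ))
  gcongr lam * M * (?_ * _ + 1)
  exact inv_pow_six_add_inv_pow_six_le hr.1 hr.2.le hs.1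
end
end

section
/- For every κ ∈ (1/2,1) there exists C > 0 with the following property. For every x ∈ ℝ³, every v ∈ ℝ³ with 0 < ‖v‖ ≤ 1/4, and every t ∈ (0,1), writing c(k) := ‖v‖ ∫₀¹ exp(−2πi(⟨k,x⟩ + s⟨k,v⟩)) ds ∈ ℂ for k ∈ ℤ³, one has ∑_{k∈ℤ³} (1+‖k‖²)^{−κ} e^{−t‖k‖²} |c(k)|² ≤ C t^{2κ−2} ‖v‖. -/
noncomputable section
open scoped ENNReal

/-- `kn2 k = ‖k‖²` for `k ∈ ℤ³`. -/
def kn2 (k : Fin 3 → ℤ) : ℝ := ∑ i, ((k i : ℝ)) ^ 2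

/-- The `k`-th Fourier coefficient of the line-integration measure `δ_ℓ` on the torus
associated to the segment `ℓ = (x, v)`:
`c(k) = ‖v‖ ∫₀¹ exp(−2πi(⟨k,x⟩ + s⟨k,v⟩)) ds`. -/
def lineCoef (x v : EuclideanSpace ℝ (Fin 3)) (k : Fin 3 → ℤ) : ℂ :=
  (‖v‖ : ℂ) * ∫ s in (0:ℝ)..1,
    Complex.exp (-2 * (Real.pi : ℂ) * Complex.I *
      ((((∑ i, (k i : ℝ) * x i) + s * ∑ i, (k i : ℝ) * v i : ℝ)) : ℂ))

/- The heat factor is traded for polynomial decay, `e^{-tK} ≲ t^{-p} (1 + K)^{-p}`, which turns the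
Sobolev weight `(1 + ‖k‖²)^{-κ}` into `(1 + ‖k‖²)^{-(κ + p)}`. The phase of `c(k)` is affine in `s`
with slope `⟨k, v⟩`, so `|c(k)|² ≲ ‖v‖² / (1 + ⟨k, v⟩²)`. Fix a coordinate `i` in which `|v i|` is
comparable to `‖v‖`. Summing the second factor over `k i` alone costs `1 + 1 / |v i|`, uniformly in
the other two coordinates, over which the weight is summable as soon as `κ + p > 1`. Since
`‖v‖² (1 + 1 / |v i|) ≲ ‖v‖ (1 + ‖v‖)`, the choice `p = 2 - 2κ` gives the theorem. -/

section FourierCoefficient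

open Complex

lemma norm_exp_neg_two_pi_I_mul (r : ℝ) : ‖exp (-2 * (Real.pi : ℂ) * I * r)‖ = 1 := by
  simp [norm_exp]

/-- The oscillatory integral `∫₀¹ e^{-2πi(a + sb)} ds` of a phase with slope `b`, which is the
Fourier coefficient of a segment up to its length. -/
def phaseIntegral (a b : ℝ) : ℂ :=
  ∫ s in (0 : ℝ)..1, exp (-2 * (Real.pi : ℂ) * I * ((a + s * b : ℝ) : ℂ))

lemma norm_phaseIntegral_le_one (a b : ℝ) : ‖phaseIntegral a b‖ ≤ 1 := by
  simpa [phaseIntegral] using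
    intervalIntegral.norm_integral_le_of_norm_le_const (a := (0 : ℝ)) (b := 1)
      fun s _ ↦ (norm_exp_neg_two_pi_I_mul (a + s * b)).le

lemma phaseIntegral_eq (a : ℝ) {b : ℝ} (hb : b ≠ 0) :
    phaseIntegral a b = exp (-2 * (Real.pi : ℂ) * I * a) *
      ((exp (-2 * (Real.pi : ℂ) * I * b) - 1) / (-2 * (Real.pi : ℂ) * I * b)) := by
  have hc : -2 * (Real.pi : ℂ) * I * b ≠ 0 := by simp [Real.pi_ne_zero, hb]
  calc phaseIntegral a b
      = ∫ s in (0 : ℝ)..1, exp (-2 * (Real.pi : ℂ) * I * a) *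
          exp (-2 * (Real.pi : ℂ) * I * b * s) := by
        rw [phaseIntegral]
        congr 1 with s
        rw [← exp_add]
        push_cast
        ring_nf
    _ = _ := by
        rw [intervalIntegral.integral_const_mul, integral_exp_mul_complex hc]
        simp

lemma norm_phaseIntegral_mul_abs_le_one (a b : ℝ) : ‖phaseIntegral a b‖ * |b| ≤ 1 := by
  rcases eq_or_ne b 0 with rfl | hb
  · simp
  have hnum : ‖exp (-2 * (Real.pi : ℂ) * I * b) - 1‖ ≤ 2 := by
    refine (norm_sub_le _ _).trans ?_
    rw [norm_exp_neg_two_pi_I_mul, norm_one]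
    norm_num
  have hden : ‖-2 * (Real.pi : ℂ) * I * b‖ = 2 * Real.pi * |b| := by
    simp [abs_of_pos Real.pi_pos]
  rw [phaseIntegral_eq a hb, norm_mul, norm_exp_neg_two_pi_I_mul, one_mul, norm_div, hden,
    div_mul_eq_mul_div, div_le_one (by positivity)]
  gcongr
  linarith [Real.pi_gt_three]

lemma sq_norm_phaseIntegral_le (a b : ℝ) : ‖phaseIntegral a b‖ ^ 2 ≤ 2 * (1 + b ^ 2)⁻¹ := by
  have h_one := pow_le_one₀ (n := 2) (norm_nonneg _) (norm_phaseIntegral_le_one a b)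
  have h_slope := pow_le_one₀ (n := 2) (by positivity)
    (norm_phaseIntegral_mul_abs_le_one a b)
  rw [mul_pow, sq_abs] at h_slope
  rw [← div_eq_mul_inv, le_div_iff₀ (by positivity)]
  linarith

lemma sq_norm_lineCoef_le (x v : EuclideanSpace ℝ (Fin 3)) (k : Fin 3 → ℤ) :
    ‖lineCoef x v k‖ ^ 2 ≤ ‖v‖ ^ 2 * (2 * (1 + (∑ i, (k i : ℝ) * v i) ^ 2)⁻¹) := by
  rw [lineCoef, norm_mul, mul_pow, norm_real, norm_norm]
  gcongr
  exact sq_norm_phaseIntegral_le _ _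

end FourierCoefficient

section OneDimensionalSums

lemma sum_range_inv_one_add_mul_sq_le {c : ℝ} (hc : 0 < c) (N : ℕ) :
    ∑ n ∈ Finset.range N, (1 + (c * (n + 1 : ℕ)) ^ 2)⁻¹ ≤ Real.pi / (2 * c) := by
  have hanti : AntitoneOn (fun x : ℝ ↦ (1 + (c * x) ^ 2)⁻¹) (Set.Icc 0 (0 + N)) := by
    intro x hx y _ hxy
    have := hx.1
    dsimp only
    gcongr
  calc ∑ n ∈ Finset.range N, (1 + (c * (n + 1 : ℕ)) ^ 2)⁻¹
      ≤ ∫ x in (0 : ℝ)..N, (1 + (c * x) ^ 2)⁻¹ := by simpa using hanti.sum_le_integral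
    _ = c⁻¹ * Real.arctan (c * N) := by
        rw [intervalIntegral.integral_comp_mul_left (fun x ↦ (1 + x ^ 2)⁻¹) hc.ne']
        simp
    _ ≤ c⁻¹ * (Real.pi / 2) := by
        gcongr
        exact (Real.arctan_lt_pi_div_two _).le
    _ = Real.pi / (2 * c) := by
        field_simp

lemma tsum_int_inv_one_add_mul_sq_le {c : ℝ} (hc : 0 < c) :
    ∑' n : ℤ, ENNReal.ofReal (1 + (c * n) ^ 2)⁻¹ ≤ ENNReal.ofReal (1 + Real.pi / c) := by
  have htail : ∑' n : ℕ, ENNReal.ofReal (1 + (c * (n + 1 : ℕ)) ^ 2)⁻¹ ≤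
      ENNReal.ofReal (Real.pi / (2 * c)) := by
    refine ENNReal.tsum_le_of_sum_range_le fun N ↦ ?_
    rw [← ENNReal.ofReal_sum_of_nonneg fun _ _ ↦ by positivity]
    exact ENNReal.ofReal_le_ofReal (sum_range_inv_one_add_mul_sq_le hc N)
  have hneg (n : ℕ) : (1 + (c * (-(n + 1 : ℤ) : ℤ)) ^ 2)⁻¹ = (1 + (c * (n + 1 : ℕ)) ^ 2)⁻¹ := by
    push_cast
    ring_nf
  calc ∑' n : ℤ, ENNReal.ofReal (1 + (c * n) ^ 2)⁻¹
      = 1 + ∑' n : ℕ, ENNReal.ofReal (1 + (c * (n + 1 : ℕ)) ^ 2)⁻¹ +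
          ∑' n : ℕ, ENNReal.ofReal (1 + (c * (n + 1 : ℕ)) ^ 2)⁻¹ := by
        rw [tsum_of_nat_of_neg_add_one ENNReal.summable ENNReal.summable,
          tsum_eq_zero_add' ENNReal.summable]
        simp only [hneg]
        simp
    _ ≤ ENNReal.ofReal 1 + ENNReal.ofReal (Real.pi / (2 * c)) +
          ENNReal.ofReal (Real.pi / (2 * c)) := by
        rw [ENNReal.ofReal_one]
        gcongr
    _ = ENNReal.ofReal (1 + Real.pi / c) := by
        rw [← ENNReal.ofReal_add (by positivity) (by positivity),
          ← ENNReal.ofReal_add (by positivity) (by positivity)]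
        congr 1
        field_simp
        ring

lemma abs_intCast_le_two_mul_abs_add {θ : ℝ} (hθ : |θ| ≤ 1 / 2) (n : ℤ) :
    |(n : ℝ)| ≤ 2 * |n + θ| := by
  rcases eq_or_ne n 0 with rfl | hn
  · simp
  have hn1 : (1 : ℝ) ≤ |(n : ℝ)| := by exact_mod_cast Int.one_le_abs hn
  have htri : |(n : ℝ)| ≤ |n + θ| + |θ| := by simpa using abs_sub (n + θ : ℝ) θ
  linarith

/-- Translating by the integer nearest to `a / w` reduces to `|a| ≤ |w| / 2`, where
`|n w + a| ≥ |n w| / 2`. -/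
lemma tsum_int_inv_one_add_sq_affine_le {w : ℝ} (hw : w ≠ 0) (a : ℝ) :
    ∑' n : ℤ, ENNReal.ofReal (1 + (n * w + a) ^ 2)⁻¹ ≤
      ENNReal.ofReal (1 + 2 * Real.pi / |w|) := by
  have hw' : 0 < |w| := abs_pos.mpr hw
  set m := round (a / w)
  have hdist (n : ℤ) : (|w| / 2 * n) ^ 2 ≤ ((n - m : ℤ) * w + a) ^ 2 := by
    have hfactor : ((n - m : ℤ) * w + a) = w * (n + (a / w - m)) := by
      push_cast
      field_simp
      ring
    rw [hfactor, sq_le_sq, abs_mul, abs_mul, abs_of_nonneg (by positivity : 0 ≤ |w| / 2)]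
    have := mul_le_mul_of_nonneg_left
      (abs_intCast_le_two_mul_abs_add (abs_sub_round (a / w)) n) hw'.le
    linarith
  calc ∑' n : ℤ, ENNReal.ofReal (1 + (n * w + a) ^ 2)⁻¹
      = ∑' n : ℤ, ENNReal.ofReal (1 + ((n - m : ℤ) * w + a) ^ 2)⁻¹ :=
        ((Equiv.subRight m).tsum_eq fun n : ℤ ↦ ENNReal.ofReal (1 + (n * w + a) ^ 2)⁻¹).symm
    _ ≤ ∑' n : ℤ, ENNReal.ofReal (1 + (|w| / 2 * n) ^ 2)⁻¹ := by
        refine ENNReal.tsum_le_tsum fun n ↦ ENNReal.ofReal_le_ofReal ?_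
        exact inv_anti₀ (by positivity) (by linarith [hdist n])
    _ ≤ ENNReal.ofReal (1 + Real.pi / (|w| / 2)) := tsum_int_inv_one_add_mul_sq_le (by positivity)
    _ = ENNReal.ofReal (1 + 2 * Real.pi / |w|) := by
        congr 2
        field_simp

end OneDimensionalSums

section LatticeSums

lemma summable_int_pi_sum_sq_rpow {ι : Type*} [Fintype ι] {q : ℝ} (hq : Fintype.card ι < 2 * q) :
    Summable fun m : ι → ℤ ↦ (∑ i, (m i : ℝ) ^ 2) ^ (-q) := by
  classical
  let b := (EuclideanSpace.basisFun ι ℝ).toBasis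
  have hb (j : ι) : b j = EuclideanSpace.single j 1 := by simp [b]
  let e : (ι → ℤ) ≃ Submodule.span ℤ (Set.range b) :=
    (b.restrictScalars ℤ).equivFun.symm.toEquiv
  have hrank : Module.finrank ℤ (Submodule.span ℤ (Set.range b)) = Fintype.card ι :=
    Module.finrank_eq_card_basis (b.restrictScalars ℤ)
  have hcoord (m : ι → ℤ) (i : ι) : (e m : EuclideanSpace ℝ ι) i = m i := by
    have he : e m = ∑ j, m j • b.restrictScalars ℤ j := (b.restrictScalars ℤ).equivFun_symm_apply m
    rw [he, Submodule.coe_sum]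
    simp [hb, Pi.single_apply]
  have hsum := e.summable_iff.mpr <| ZLattice.summable_norm_rpow
    (Submodule.span ℤ (Set.range b)) (-(2 * q)) (by rw [hrank]; linarith)
  refine hsum.congr fun m ↦ ?_
  have hnorm : ‖e m‖ = √(∑ i, (m i : ℝ) ^ 2) := by
    simp [EuclideanSpace.norm_eq, hcoord]
  rw [Function.comp_apply, hnorm, Real.sqrt_eq_rpow, ← Real.rpow_mul (by positivity)]
  congr 1
  ring

lemma summable_int_pi_one_add_sum_sq_rpow {ι : Type*} [Fintype ι] {q : ℝ}
    (hq : Fintype.card ι < 2 * q) :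
    Summable fun m : ι → ℤ ↦ (1 + ∑ i, (m i : ℝ) ^ 2) ^ (-q) := by
  have : 0 ≤ q := by linarith [(Fintype.card ι).cast_nonneg (α := ℝ)]
  refine (summable_int_pi_sum_sq_rpow hq).of_norm_bounded_eventually ?_
  filter_upwards [(Set.finite_singleton (0 : ι → ℤ)).eventually_cofinite_notMem] with m hm
  obtain ⟨i, hi⟩ := Function.ne_iff.mp hm
  have hpos : 0 < ∑ i, (m i : ℝ) ^ 2 :=
    Finset.sum_pos' (fun _ _ ↦ sq_nonneg _) ⟨i, Finset.mem_univ i, by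
      have : (m i : ℝ) ≠ 0 := by exact_mod_cast hi
      positivity⟩
  rw [Real.norm_of_nonneg (by positivity)]
  exact Real.rpow_le_rpow_of_nonpos hpos (by linarith) (by linarith)

lemma tsum_lattice_rpow_mul_inv_one_add_inner_sq_le {d : ℕ} {q : ℝ} (hq : 0 ≤ q)
    (v : Fin (d + 1) → ℝ) {i : Fin (d + 1)} (hi : v i ≠ 0) :
    ∑' k : Fin (d + 1) → ℤ, ENNReal.ofReal ((1 + ∑ j, (k j : ℝ) ^ 2) ^ (-q)) *
        ENNReal.ofReal (1 + (∑ j, (k j : ℝ) * v j) ^ 2)⁻¹ ≤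
      (∑' m : Fin d → ℤ, ENNReal.ofReal ((1 + ∑ j, (m j : ℝ) ^ 2) ^ (-q))) *
        ENNReal.ofReal (1 + 2 * Real.pi / |v i|) := by
  rw [← (Fin.insertNthEquiv (fun _ ↦ ℤ) i).tsum_eq, ENNReal.tsum_prod', ENNReal.tsum_comm,
    ← ENNReal.tsum_mul_right]
  refine ENNReal.tsum_le_tsum fun m ↦ ?_
  set a : ℝ := ∑ j, (m j : ℝ) * v (i.succAbove j)
  calc _ ≤ ∑' l : ℤ, ENNReal.ofReal ((1 + ∑ j, (m j : ℝ) ^ 2) ^ (-q)) *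
          ENNReal.ofReal (1 + (l * v i + a) ^ 2)⁻¹ := by
        refine ENNReal.tsum_le_tsum fun l ↦ ?_
        simp only [Fin.insertNthEquiv_apply, Fin.sum_univ_succAbove _ i, Fin.insertNth_apply_same,
          Fin.insertNth_apply_succAbove]
        gcongr ENNReal.ofReal ?_ * _
        refine Real.rpow_le_rpow_of_nonpos (by positivity) ?_ (neg_nonpos.mpr hq)
        gcongr
        exact le_add_of_nonneg_left (sq_nonneg _)
    _ ≤ _ := by
        rw [ENNReal.tsum_mul_left]
        gcongr
        exact tsum_int_inv_one_add_sq_affine_le hi a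

end LatticeSums

section HeatFactor

/-- At `p = 0` the constant `p ^ p` is `0 ^ 0 = 1`. -/
lemma rpow_le_rpow_self_mul_exp {s p : ℝ} (hs : 0 ≤ s) (hp : 0 ≤ p) :
    s ^ p ≤ p ^ p * Real.exp s := by
  rcases hp.eq_or_lt with rfl | hp
  · simpa using hs
  calc s ^ p = p ^ p * (s / p) ^ p := by
        rw [← Real.mul_rpow hp.le (by positivity), mul_div_cancel₀ _ hp.ne']
    _ ≤ p ^ p * Real.exp (s / p) ^ p := by
        gcongr
        linarith [Real.add_one_le_exp (s / p)]
    _ = p ^ p * Real.exp s := by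
        rw [← Real.exp_mul, div_mul_cancel₀ _ hp.ne']

lemma exp_neg_mul_le_rpow {p t K : ℝ} (hp : 0 ≤ p) (ht : t ∈ Set.Ioc 0 1) (hK : 0 < 1 + K) :
    Real.exp (-t * K) ≤ Real.exp 1 * p ^ p * t ^ (-p) * (1 + K) ^ (-p) := by
  obtain ⟨ht0, ht1⟩ := ht
  have hs : 0 < t * (1 + K) := by positivity
  calc Real.exp (-t * K) ≤ Real.exp 1 * Real.exp (-(t * (1 + K))) := by
        rw [← Real.exp_add, Real.exp_le_exp]
        linarith
    _ ≤ Real.exp 1 * (p ^ p * (t * (1 + K)) ^ (-p)) := by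
        gcongr
        rw [Real.exp_neg, Real.rpow_neg hs.le, ← div_eq_mul_inv, le_div_iff₀ (by positivity),
          inv_mul_le_iff₀ (Real.exp_pos _), mul_comm (Real.exp _)]
        exact rpow_le_rpow_self_mul_exp hs.le hp
    _ = Real.exp 1 * p ^ p * t ^ (-p) * (1 + K) ^ (-p) := by
        rw [Real.mul_rpow ht0.le hK.le]
        ring

end HeatFactor

lemma exists_norm_le_sqrt_card_mul_abs {ι : Type*} [Fintype ι] [Nonempty ι]
    (v : EuclideanSpace ℝ ι) : ∃ i, ‖v‖ ≤ √(Fintype.card ι) * |v i| := by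
  obtain ⟨i, hi⟩ := Finite.exists_max fun j ↦ |v j|
  refine ⟨i, ?_⟩
  rw [EuclideanSpace.norm_eq, ← Real.sqrt_sq_eq_abs, ← Real.sqrt_mul (by positivity)]
  gcongr
  calc ∑ j, ‖v j‖ ^ 2 ≤ ∑ _j : ι, |v i| ^ 2 := by
        gcongr with j
        exact hi j
    _ = Fintype.card ι * v i ^ 2 := by simp

section SegmentEnergy

lemma kn2_nonneg (k : Fin 3 → ℤ) : 0 ≤ kn2 k :=
  Finset.sum_nonneg fun _ _ ↦ sq_nonneg _

lemma weight_mul_sq_norm_lineCoef_le {κ p t : ℝ} (hp : 0 ≤ p) (ht : t ∈ Set.Ioc 0 1)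
    (x v : EuclideanSpace ℝ (Fin 3)) (k : Fin 3 → ℤ) :
    (1 + kn2 k) ^ (-κ) * Real.exp (-t * kn2 k) * ‖lineCoef x v k‖ ^ 2 ≤
      2 * Real.exp 1 * p ^ p * t ^ (-p) * ‖v‖ ^ 2 *
        ((1 + kn2 k) ^ (-(κ + p)) * (1 + (∑ i, (k i : ℝ) * v i) ^ 2)⁻¹) := by
  have hK : 0 < 1 + kn2 k := by linarith [kn2_nonneg k]
  have hweight : (1 + kn2 k) ^ (-(κ + p)) = (1 + kn2 k) ^ (-κ) * (1 + kn2 k) ^ (-p) := by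
    rw [← Real.rpow_add hK]
    ring_nf
  calc (1 + kn2 k) ^ (-κ) * Real.exp (-t * kn2 k) * ‖lineCoef x v k‖ ^ 2
      ≤ (1 + kn2 k) ^ (-κ) * (Real.exp 1 * p ^ p * t ^ (-p) * (1 + kn2 k) ^ (-p)) *
          (‖v‖ ^ 2 * (2 * (1 + (∑ i, (k i : ℝ) * v i) ^ 2)⁻¹)) := by
        have := ht.1
        gcongr
        · exact exp_neg_mul_le_rpow hp ht hK
        · exact sq_norm_lineCoef_le x v k
    _ = _ := by
        rw [hweight]
        ring

lemma tsum_weight_mul_sq_norm_lineCoef_le {κ p t : ℝ} (hp : 0 ≤ p) (hκp : 0 ≤ κ + p)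
    (ht : t ∈ Set.Ioc 0 1) (x v : EuclideanSpace ℝ (Fin 3)) {i : Fin 3} (hi : v i ≠ 0) :
    ∑' k : Fin 3 → ℤ,
        ENNReal.ofReal ((1 + kn2 k) ^ (-κ) * Real.exp (-t * kn2 k) * ‖lineCoef x v k‖ ^ 2) ≤
      ENNReal.ofReal (2 * Real.exp 1 * p ^ p * t ^ (-p) * ‖v‖ ^ 2) *
        ((∑' m : Fin 2 → ℤ, ENNReal.ofReal ((1 + ∑ j, (m j : ℝ) ^ 2) ^ (-(κ + p)))) *
          ENNReal.ofReal (1 + 2 * Real.pi / |v i|)) := by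
  have := ht.1
  calc _ ≤ ∑' k : Fin 3 → ℤ, ENNReal.ofReal (2 * Real.exp 1 * p ^ p * t ^ (-p) * ‖v‖ ^ 2) *
          (ENNReal.ofReal ((1 + kn2 k) ^ (-(κ + p))) *
            ENNReal.ofReal (1 + (∑ i, (k i : ℝ) * v i) ^ 2)⁻¹) := by
        refine ENNReal.tsum_le_tsum fun k ↦ ?_
        have := kn2_nonneg k
        rw [← ENNReal.ofReal_mul (by positivity), ← ENNReal.ofReal_mul (by positivity)]
        exact ENNReal.ofReal_le_ofReal (weight_mul_sq_norm_lineCoef_le hp ht x v k)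
    _ ≤ _ := by
        rw [ENNReal.tsum_mul_left]
        gcongr
        exact tsum_lattice_rpow_mul_inv_one_add_inner_sq_le hκp v hi

lemma sq_mul_one_add_div_le {r a b : ℝ} (hr : 0 ≤ r) (ha : 0 < a) (hb : 1 ≤ b)
    (hra : r ≤ b * a) : r ^ 2 * (1 + 2 * Real.pi / a) ≤ 2 * Real.pi * b * (r * (1 + r)) := by
  have hconst : 1 ≤ 2 * Real.pi * b := by nlinarith [Real.pi_gt_three]
  have hratio : r / a ≤ b := (div_le_iff₀ ha).mpr hra
  calc r ^ 2 * (1 + 2 * Real.pi / a) = 1 * r ^ 2 + 2 * Real.pi * (r / a) * r := by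
        field_simp
    _ ≤ 2 * Real.pi * b * r ^ 2 + 2 * Real.pi * b * r := by gcongr
    _ = 2 * Real.pi * b * (r * (1 + r)) := by ring

theorem stmt_2_general {κ p : ℝ} (hp : 0 ≤ p) (hκp : 1 < κ + p) :
    ∃ C : ℝ, 0 < C ∧
      ∀ (x v : EuclideanSpace ℝ (Fin 3)) (t : ℝ), t ∈ Set.Ioc (0 : ℝ) 1 →
        ∑' k : Fin 3 → ℤ,
            ENNReal.ofReal
              ((1 + kn2 k) ^ (-κ) * Real.exp (-t * kn2 k) * ‖lineCoef x v k‖ ^ 2)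
          ≤ ENNReal.ofReal (C * t ^ (-p) * (‖v‖ * (1 + ‖v‖))) := by
  set S := ∑' m : Fin 2 → ℤ, (1 + ∑ j, (m j : ℝ) ^ 2) ^ (-(κ + p))
  have hS0 : 0 ≤ S := tsum_nonneg fun m ↦ by positivity
  have hsum : ∑' m : Fin 2 → ℤ, ENNReal.ofReal ((1 + ∑ j, (m j : ℝ) ^ 2) ^ (-(κ + p))) =
      ENNReal.ofReal S :=
    (ENNReal.ofReal_tsum_of_nonneg (fun m ↦ by positivity)
      (summable_int_pi_one_add_sum_sq_rpow (by simpa using hκp))).symm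
  refine ⟨4 * Real.exp 1 * p ^ p * S * Real.pi * √3 + 1, by positivity, fun x v t ht ↦ ?_⟩
  have ht0 := ht.1
  obtain ⟨i, hi⟩ := exists_norm_le_sqrt_card_mul_abs v
  rcases eq_or_ne v 0 with rfl | hv
  · simp [lineCoef]
  have hvi : v i ≠ 0 := fun h ↦ hv (by simpa [h] using hi)
  refine (tsum_weight_mul_sq_norm_lineCoef_le hp (by linarith) ht x v hvi).trans ?_
  rw [hsum, ← ENNReal.ofReal_mul hS0, ← ENNReal.ofReal_mul (by positivity)]
  apply ENNReal.ofReal_le_ofReal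
  calc 2 * Real.exp 1 * p ^ p * t ^ (-p) * ‖v‖ ^ 2 * (S * (1 + 2 * Real.pi / |v i|))
      = 2 * Real.exp 1 * p ^ p * S * t ^ (-p) * (‖v‖ ^ 2 * (1 + 2 * Real.pi / |v i|)) := by ring
    _ ≤ 2 * Real.exp 1 * p ^ p * S * t ^ (-p) * (2 * Real.pi * √3 * (‖v‖ * (1 + ‖v‖))) := by
        gcongr _ * ?_
        exact sq_mul_one_add_div_le (norm_nonneg v) (abs_pos.mpr hvi)
          (Real.one_le_sqrt.mpr (by norm_num)) (by simpa using hi)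
    _ = 4 * Real.exp 1 * p ^ p * S * Real.pi * √3 * t ^ (-p) * (‖v‖ * (1 + ‖v‖)) := by ring
    _ ≤ _ := by
        gcongr
        exact le_add_of_nonneg_right zero_le_one

end SegmentEnergy

theorem stmt_2 (κ : ℝ) (hκ : κ ∈ Set.Ioo (1/2 : ℝ) 1) :
    ∃ C : ℝ, 0 < C ∧
      ∀ (x v : EuclideanSpace ℝ (Fin 3)) (t : ℝ),
        0 < ‖v‖ → ‖v‖ ≤ 1/4 → t ∈ Set.Ioo (0:ℝ) 1 →
        ∑' k : Fin 3 → ℤ,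
            ENNReal.ofReal
              ((1 + kn2 k) ^ (-κ) * Real.exp (-t * kn2 k) * ‖lineCoef x v k‖ ^ 2)
          ≤ ENNReal.ofReal (C * t ^ (2 * κ - 2) * ‖v‖) := by
  obtain ⟨C, hC, hbound⟩ := stmt_2_general (κ := κ) (p := 2 - 2 * κ) (by linarith [hκ.2])
    (by linarith [hκ.2])
  refine ⟨C * (5 / 4), by positivity, fun x v t _ hv ht ↦
    (hbound x v t (Set.Ioo_subset_Ioc_self ht)).trans (ENNReal.ofReal_le_ofReal ?_)⟩
  have ht0 := ht.1
  calc C * t ^ (-(2 - 2 * κ)) * (‖v‖ * (1 + ‖v‖)) ≤ C * t ^ (-(2 - 2 * κ)) * (‖v‖ * (5 / 4)) := by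
        gcongr
        linarith
    _ = C * (5 / 4) * t ^ (2 * κ - 2) * ‖v‖ := by
        rw [neg_sub]
        ring
end
end
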